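/- arXiv:1908.05272 — 8 statements merged into one kernel-verified Lean document; each statement's English description precedes it below -/
import Mathlib

section
/- Let (p_1,…,p_m) be a random vector with values in [0,1]^m that is PRDS on a set I_0 ⊆ {1,…,m} with #I_0 = m_0, and suppose P(p_i ≤ x) ≤ x for every x ∈ [0,1] and every i ∈ I_0. Then the Benjamini–Hochberg procedure at level α ∈ (0,1) controls the false discovery rate at level (m_0/m)·α, i.e. E[Q] ≤ (m_0/m)·α ≤ α. -/
open Filter Set MeasureTheory
open scoped Classical

theorem BH_key {Ω : Type*} [MeasurableSpace Ω] (P : Measure Ω) [IsProbabilityMeasure P]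
    (X : Ω → ℝ) (hX : Measurable X) (hX01 : ∀ ω, X ω ∈ Set.Icc (0:ℝ) 1)
    (E : Set Ω) (hE : MeasurableSet E) (g : ℝ → ℝ) (hg : MonotoneOn g (Set.Icc 0 1))
    (hgE : (fun ω => g (X ω)) =ᵐ[P] P[E.indicator (fun _ => (1:ℝ)) |
            MeasurableSpace.comap X (inferInstance : MeasurableSpace ℝ)])
    (a b : ℝ) (ha : a ∈ Set.Icc (0:ℝ) 1) (hab : a ≤ b) :
    P.real ({ω | X ω ≤ a} ∩ E) * P.real {ω | X ω ≤ b} ≤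
      P.real ({ω | X ω ≤ b} ∩ E) * P.real {ω | X ω ≤ a} := by
  have hle : MeasurableSpace.comap X (inferInstance : MeasurableSpace ℝ) ≤ _ := hX.comap_le
  have hint : Integrable (fun ω => g (X ω)) P := integrable_condExp.congr hgE.symm
  have hI : ∀ T : Set ℝ, MeasurableSet T →
      ∫ ω in X ⁻¹' T, g (X ω) ∂P = P.real (X ⁻¹' T ∩ E) := by
    intro T hT
    have h1 : ∫ ω in X ⁻¹' T, g (X ω) ∂P = ∫ ω in X ⁻¹' T, (P[E.indicator (fun _ => (1:ℝ)) |
            MeasurableSpace.comap X (inferInstance : MeasurableSpace ℝ)]) ω ∂P :=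
      integral_congr_ae (ae_restrict_of_ae hgE)
    rw [h1, setIntegral_condExp hle ((integrable_const (1:ℝ)).indicator hE) ⟨T, hT, rfl⟩,
      setIntegral_indicator hE]
    simp [Measure.real]
  have hA : P.real ({ω | X ω ≤ a} ∩ E) ≤ g a * P.real {ω | X ω ≤ a} := by
    have := hI (Set.Iic a) measurableSet_Iic
    change _ = P.real ({ω | X ω ≤ a} ∩ E) at this
    rw [← this]
    have h2 : ∫ ω in X ⁻¹' Set.Iic a, g (X ω) ∂P ≤ ∫ ω in X ⁻¹' Set.Iic a, g a ∂P := by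
      refine setIntegral_mono_on hint.integrableOn (integrable_const _).integrableOn
        (hX measurableSet_Iic) ?_
      intro ω hω
      exact hg (hX01 ω) ha hω
    refine h2.trans (le_of_eq ?_)
    rw [setIntegral_const, smul_eq_mul, mul_comm]
    rfl
  have hB : g a * P.real (X ⁻¹' Set.Ioc a b) ≤ P.real (X ⁻¹' Set.Ioc a b ∩ E) := by
    rw [← hI _ measurableSet_Ioc]
    have h2 : ∫ ω in X ⁻¹' Set.Ioc a b, g a ∂P ≤ ∫ ω in X ⁻¹' Set.Ioc a b, g (X ω) ∂P := by
      refine setIntegral_mono_on (integrable_const _).integrableOn hint.integrableOn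
        (hX measurableSet_Ioc) ?_
      intro ω hω
      exact hg ha (hX01 ω) (le_of_lt hω.1)
    refine le_trans (le_of_eq ?_) h2
    rw [setIntegral_const, smul_eq_mul, mul_comm]
  have hU : {ω | X ω ≤ b} = {ω | X ω ≤ a} ∪ X ⁻¹' Set.Ioc a b := by
    ext ω
    simp only [Set.mem_setOf_eq, Set.mem_union, Set.mem_preimage, Set.mem_Ioc]
    grind
  have hd : Disjoint {ω | X ω ≤ a} (X ⁻¹' Set.Ioc a b) := by
    rw [Set.disjoint_left]
    intro ω h1 h2
    exact absurd h1 (not_le.mpr h2.1)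
  have e1 : P.real {ω | X ω ≤ b} = P.real {ω | X ω ≤ a} + P.real (X ⁻¹' Set.Ioc a b) := by
    rw [hU, measureReal_union hd (hX measurableSet_Ioc)]
  have e2 : P.real ({ω | X ω ≤ b} ∩ E) =
      P.real ({ω | X ω ≤ a} ∩ E) + P.real (X ⁻¹' Set.Ioc a b ∩ E) := by
    rw [hU, Set.union_inter_distrib_right,
      measureReal_union (hd.mono Set.inter_subset_left Set.inter_subset_left)
        ((hX measurableSet_Ioc).inter hE)]
  rw [e1, e2]
  have n1 : 0 ≤ P.real {ω | X ω ≤ a} := measureReal_nonneg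
  have n2 : 0 ≤ P.real (X ⁻¹' Set.Ioc a b) := measureReal_nonneg
  nlinarith [mul_le_mul_of_nonneg_right hA n2, mul_le_mul_of_nonneg_right hB n1]

/-- one telescoping step -/
theorem BH_step (x y u v w c : ℝ) (j : ℝ) (hj : 0 < j) (hc : 0 ≤ c) (hx : 0 ≤ x) (hxy : x ≤ y)
    (hyj : y ≤ j * c) (hu : 0 ≤ u) (hux : u ≤ x) (hv : 0 ≤ v) (hvw : v ≤ w) (hw : w ≤ y)
    (hkey : u * y ≤ v * x) :
    (w - v) / j ≤ c * (w / y - u / x) := by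
  rcases eq_or_lt_of_le (hx.trans hxy) with hy | hy
  · have hx0 : x = 0 := by linarith
    have hw0 : w = 0 := by linarith
    have hv0 : v = 0 := by linarith
    rw [hx0, hw0, hv0]; simp
  · have h1 : u / x ≤ v / y := by
      rcases eq_or_lt_of_le hx with h | h
      · rw [← h]; simp; positivity
      · rw [div_le_div_iff₀ h hy]; exact hkey
    have h2 : (w - v) / j ≤ c * ((w - v) / y) := by
      rw [div_le_iff₀ hj]
      have : c * ((w - v) / y) * j = (w - v) * ((j * c) / y) := by ring
      rw [this]
      have : 1 ≤ (j * c) / y := by rw [le_div_iff₀ hy]; linarith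
      nlinarith
    refine h2.trans (mul_le_mul_of_nonneg_left ?_ hc)
    rw [sub_div]; linarith

theorem BH_k_le (m : ℕ) (N : ℕ → ℕ) (j : ℕ) :
    sSup {j | j ≤ m ∧ j ≤ N j} ≤ j ↔ ∀ l ∈ Finset.range (m+1), j < l → N l < l := by
  have hb : BddAbove {j | j ≤ m ∧ j ≤ N j} := ⟨m, fun x hx => hx.1⟩
  constructor
  · intro h l hl hjl
    by_contra hc
    have := le_csSup hb (show l ∈ _ from ⟨by simpa [Nat.lt_succ_iff] using hl, not_lt.mp hc⟩)
    omega
  · intro h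
    refine csSup_le ⟨0, by simp⟩ ?_
    rintro l ⟨h1, h2⟩
    by_contra hc
    have := h l (by simp; omega) (by omega)
    omega

/-- Benjamini–Yekutieli: if the p-value vector `(p_1, …, p_m)` is PRDS on `I₀`
(with `#I₀ = m₀`) and each null p-value is superuniform, then the Benjamini–Hochberg procedure
at level `α ∈ (0,1)` controls the FDR: `E[Q] ≤ (m₀/m)·α ≤ α`.

The BH procedure rejects `i` iff `p_i ≤ (k/m)·α` where `k = max {j : p_(j) ≤ (j/m)·α}`;
we use the equivalent characterization `p_(j) ≤ c ↔ #{i : p_i ≤ c} ≥ j`, so that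
`k = sup {j ≤ m : j ≤ #{i : p_i ≤ (j/m)·α}}` (a set containing `0`).
PRDS on `I₀` means: for every `i ∈ I₀` and every measurable increasing set `D ⊆ ℝ^m`, there is
a nondecreasing `g : [0,1] → [0,1]` such that `g (p_i)` is a version of `E[1_D (p) | p_i]`. -/
theorem BH_controls_FDR
    {Ω : Type*} [MeasurableSpace Ω] (P : Measure Ω) [IsProbabilityMeasure P]
    (m : ℕ) (hm : 1 ≤ m) (α : ℝ) (hα : α ∈ Set.Ioo (0:ℝ) 1)
    (p : Ω → Fin m → ℝ) (hp_meas : Measurable p)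
    (hp_val : ∀ ω i, p ω i ∈ Set.Icc (0:ℝ) 1)
    (I₀ : Finset (Fin m)) (m₀ : ℕ) (hm₀ : I₀.card = m₀)
    -- superuniformity of the null p-values
    (hsuper : ∀ i ∈ I₀, ∀ x ∈ Set.Icc (0:ℝ) 1,
      P {ω | p ω i ≤ x} ≤ ENNReal.ofReal x)
    -- PRDS on I₀
    (hPRDS : ∀ i ∈ I₀, ∀ D : Set (Fin m → ℝ), MeasurableSet D →
      (∀ x y : Fin m → ℝ, x ∈ D → x ≤ y → y ∈ D) →
      ∃ g : ℝ → ℝ, MonotoneOn g (Set.Icc 0 1) ∧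
        (fun ω => g (p ω i)) =ᵐ[P]
          P[(fun ω => D.indicator (fun _ => (1:ℝ)) (p ω)) |
            MeasurableSpace.comap (fun ω => p ω i) (inferInstance : MeasurableSpace ℝ)])
    -- the BH procedure
    (k : Ω → ℕ)
    (hk : ∀ ω, k ω = sSup {j | j ≤ m ∧
      j ≤ (Finset.univ.filter (fun i => p ω i ≤ ((j : ℝ) / m) * α)).card})
    (R : Ω → Finset (Fin m))
    (hR : ∀ ω, R ω = Finset.univ.filter (fun i => p ω i ≤ ((k ω : ℝ) / m) * α))
    -- the false discovery proportion
    (Q : Ω → ℝ)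
    (hQ : ∀ ω, Q ω = if 0 < (R ω).card then ((R ω ∩ I₀).card : ℝ) / (R ω).card else 0) :
    (∫ ω, Q ω ∂P) ≤ ((m₀ : ℝ) / m) * α ∧ ((m₀ : ℝ) / m) * α ≤ α := by
  have hm' : (0:ℝ) < m := by exact_mod_cast hm
  have hα0 := hα.1
  have hα1 := hα.2
  have hcard : m₀ ≤ m := by
    rw [← hm₀]; simpa using Finset.card_le_univ I₀
  have hfin : ((m₀ : ℝ) / m) * α ≤ α := by
    have : (m₀ : ℝ) / m ≤ 1 := by
      rw [div_le_one hm']; exact_mod_cast hcard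
    nlinarith
  refine ⟨?_, hfin⟩
  -- the cardinality of the rejection set
  have hmem : ∀ ω, k ω ≤ m ∧
      k ω ≤ (Finset.univ.filter (fun i => p ω i ≤ ((k ω : ℝ) / m) * α)).card := by
    intro ω
    have := Nat.sSup_mem (s := {j | j ≤ m ∧
      j ≤ (Finset.univ.filter (fun i => p ω i ≤ ((j : ℝ) / m) * α)).card})
      ⟨0, by simp⟩ ⟨m, fun x hx => hx.1⟩
    rw [← hk ω] at this
    exact this
  have hRk : ∀ ω, (R ω).card = k ω := by
    intro ω
    have h1 : k ω ≤ (R ω).card := by rw [hR]; exact (hmem ω).2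
    refine le_antisymm ?_ h1
    conv_rhs => rw [hk ω]
    refine le_csSup ⟨m, fun x hx => hx.1⟩ ⟨by simpa using Finset.card_le_univ (R ω), ?_⟩
    refine Finset.card_le_card ?_
    intro i hi
    have hi' := hi
    rw [hR] at hi'
    simp only [Finset.mem_filter, Finset.mem_univ, true_and] at hi' ⊢
    refine hi'.trans ?_
    have : (k ω : ℝ) ≤ (R ω).card := by exact_mod_cast h1
    gcongr
  -- increasing sets
  let D : ℕ → Set (Fin m → ℝ) := fun j => {x | ∀ l ∈ Finset.range (m+1), j < l →
    (Finset.univ.filter (fun i => x i ≤ ((l : ℝ) / m) * α)).card < l}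
  have hDmeas : ∀ j, MeasurableSet (D j) := by
    intro j
    have : D j = ⋂ l ∈ Finset.range (m+1), ⋂ (_ : j < l),
      {x | (Finset.univ.filter (fun i => x i ≤ ((l : ℝ) / m) * α)).card < l} := by
      ext x; simp [D]
    rw [this]
    refine Finset.measurableSet_biInter _ fun l _ => MeasurableSet.iInter fun _ => ?_
    have hmc : Measurable (fun x : Fin m → ℝ =>
        (Finset.univ.filter (fun i => x i ≤ ((l : ℝ) / m) * α)).card) := by
      simp only [Finset.card_filter]
      refine Finset.measurable_sum _ fun i _ => ?_
      exact Measurable.ite (measurableSet_le (measurable_pi_apply i) measurable_const)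
        measurable_const measurable_const
    exact hmc measurableSet_Iio
  have hDinc : ∀ j, ∀ x y : Fin m → ℝ, x ∈ D j → x ≤ y → y ∈ D j := by
    intro j x y hx hxy l hl hjl
    refine lt_of_le_of_lt (Finset.card_le_card ?_) (hx l hl hjl)
    intro i hi
    simp only [Finset.mem_filter, Finset.mem_univ, true_and] at hi ⊢
    exact (hxy i).trans hi
  have hkD : ∀ j, {ω | k ω ≤ j} = p ⁻¹' (D j) := by
    intro j
    ext ω
    simp only [Set.mem_setOf_eq, Set.mem_preimage, D]
    rw [hk ω]
    exact BH_k_le m _ j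
  have hkmeas : ∀ j, MeasurableSet {ω | k ω ≤ j} := by
    intro j; rw [hkD]; exact hp_meas (hDmeas j)
  have hpi : ∀ i, Measurable (fun ω => p ω i) := fun i => (measurable_pi_apply i).comp hp_meas
  let A : Fin m → ℕ → Set Ω := fun i j => {ω | p ω i ≤ ((j : ℝ) / m) * α}
  have hAmeas : ∀ i j, MeasurableSet (A i j) := fun i j =>
    measurableSet_le (hpi i) measurable_const
  have hth : ∀ j : ℕ, j ≤ m → ((j : ℝ) / m) * α ∈ Set.Icc (0:ℝ) 1 := by
    intro j hj
    have : (j : ℝ) / m ≤ 1 := by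
      rw [div_le_one hm']; exact_mod_cast hj
    refine ⟨by positivity, by nlinarith⟩
  let B : Fin m → ℕ → Set Ω := fun i j => A i (j+1) ∩ ({ω | k ω ≤ j+1} \ {ω | k ω ≤ j})
  have hBmeas : ∀ i j, MeasurableSet (B i j) := fun i j =>
    (hAmeas i _).inter ((hkmeas _).diff (hkmeas _))
  have hQeq : ∀ ω, Q ω = ∑ i ∈ I₀, ∑ j ∈ Finset.range m,
      (B i j).indicator (fun _ => 1 / ((j : ℝ) + 1)) ω := by
    intro ω
    rw [hQ, hRk]
    by_cases h0 : 0 < k ω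
    · rw [if_pos h0]
      have : ∀ i ∈ I₀, ∑ j ∈ Finset.range m, (B i j).indicator (fun _ => 1 / ((j : ℝ) + 1)) ω
          = if i ∈ R ω then 1 / (k ω : ℝ) else 0 := by
        intro i _
        obtain ⟨n, hn⟩ : ∃ n, k ω = n + 1 := ⟨k ω - 1, by omega⟩
        have hnm : n ∈ Finset.range m := by
          have := (hmem ω).1
          simp; omega
        rw [Finset.sum_eq_single_of_mem n hnm]
        · have : ω ∈ B i n ↔ i ∈ R ω := by
            rw [hR]
            simp [B, A, hn]
          rw [Set.indicator_apply]
          simp only [this, hn]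
          push_cast
          rfl
        · intro j _ hj
          apply Set.indicator_of_notMem
          simp only [B, Set.mem_inter_iff, Set.mem_diff, Set.mem_setOf_eq, hn]
          omega
      rw [Finset.sum_congr rfl this, ← Finset.sum_filter, Finset.sum_const,
        Finset.filter_mem_eq_inter, Finset.inter_comm]
      simp [div_eq_mul_inv]
    · rw [if_neg h0]
      symm
      refine Finset.sum_eq_zero fun i _ => Finset.sum_eq_zero fun j _ => ?_
      apply Set.indicator_of_notMem
      simp only [B, Set.mem_inter_iff, Set.mem_diff, Set.mem_setOf_eq]
      omega
  have hInt : ∫ ω, Q ω ∂P = ∑ i ∈ I₀, ∑ j ∈ Finset.range m, P.real (B i j) / ((j : ℝ) + 1) := by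
    simp_rw [hQeq]
    have hi : ∀ i j, Integrable ((B i j).indicator (fun _ => 1 / ((j : ℝ) + 1))) P :=
      fun i j => (integrable_const _).indicator (hBmeas i j)
    rw [integral_finsetSum _ fun i _ => integrable_finsetSum _ fun j _ => hi i j]
    refine Finset.sum_congr rfl fun i _ => ?_
    rw [integral_finsetSum _ fun j _ => hi i j]
    refine Finset.sum_congr rfl fun j _ => ?_
    rw [integral_indicator_const _ (hBmeas i j), smul_eq_mul]
    ring
  rw [hInt]
  have hmain : ∀ i ∈ I₀, ∑ j ∈ Finset.range m, P.real (B i j) / ((j : ℝ) + 1) ≤ α / m := by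
    intro i hi
    let f : ℕ → ℝ := fun j => P.real (A i j ∩ {ω | k ω ≤ j}) / P.real (A i j)
    have hstep : ∀ j ∈ Finset.range m,
        P.real (B i j) / ((j : ℝ) + 1) ≤ (α / m) * (f (j+1) - f j) := by
      intro j hj
      have hj : j < m := by simpa using hj
      have hab : ((j : ℝ) / m) * α ≤ (((j+1 : ℕ) : ℝ) / m) * α := by
        push_cast; gcongr; linarith
      have hkk : {ω | k ω ≤ j} ⊆ {ω | k ω ≤ j+1} := fun ω h => Nat.le_succ_of_le h
      have hBe : P.real (B i j) =
          P.real (A i (j+1) ∩ {ω | k ω ≤ j+1}) - P.real (A i (j+1) ∩ {ω | k ω ≤ j}) := by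
        rw [← measureReal_diff (Set.inter_subset_inter_right _ hkk)
          ((hAmeas i _).inter (hkmeas _))]
        congr 1
        ext ω
        simp only [B, Set.mem_inter_iff, Set.mem_diff]
        tauto
      rw [hBe]
      obtain ⟨g, hg, hgE⟩ := hPRDS i hi (D j) (hDmeas j) (hDinc j)
      have hkey := BH_key P (fun ω => p ω i) (hpi i) (fun ω => hp_val ω i) {ω | k ω ≤ j}
        (hkmeas j) g hg (by rw [hkD]; exact hgE) _ _ (hth j hj.le) hab
      refine BH_step (P.real (A i j)) (P.real (A i (j+1))) (P.real (A i j ∩ {ω | k ω ≤ j}))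
        (P.real (A i (j+1) ∩ {ω | k ω ≤ j})) (P.real (A i (j+1) ∩ {ω | k ω ≤ j+1})) (α / m) _
        (by positivity) (by positivity) measureReal_nonneg ?_ ?_ measureReal_nonneg
        (measureReal_mono Set.inter_subset_left) measureReal_nonneg
        (measureReal_mono (Set.inter_subset_inter_right _ hkk))
        (measureReal_mono Set.inter_subset_left) hkey
      · exact measureReal_mono fun ω h => le_trans h hab
      · have h1 := hsuper i hi _ (hth (j+1) hj)
        have h2 := ENNReal.toReal_mono ENNReal.ofReal_ne_top h1
        rw [ENNReal.toReal_ofReal (hth (j+1) hj).1] at h2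
        refine le_trans h2 (le_of_eq ?_)
        push_cast; ring
    refine (Finset.sum_le_sum hstep).trans ?_
    rw [← Finset.mul_sum, Finset.sum_range_sub]
    have hf0 : 0 ≤ f 0 := by positivity
    have hf1 : f m ≤ 1 := div_le_one_of_le₀ (measureReal_mono Set.inter_subset_left)
      measureReal_nonneg
    have : 0 ≤ α / m := by positivity
    nlinarith
  refine (Finset.sum_le_sum hmain).trans (le_of_eq ?_)
  rw [Finset.sum_const, hm₀, nsmul_eq_mul]
  ring
end

section
/- Assume that if α* > 0 then every open neighborhood of α* contains points s₁, s₂ with a(s₁) > s₁/α and a(s₂) < s₂/α. Then b_k → α* as k → ∞. -/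
open Filter Set

/-- Under assumption (a2), the finite-grid BH thresholds `b k` converge to the
adjusted threshold `α*`.  Here `a : [0,1] → [0,1]` is continuous, the `a_k` converge uniformly
to `a` on `[0,1]`, `α* = sup {r ∈ [0,1] : a r ≥ r/α}` and `b k = sup {r ∈ [0,1] : a_k r ≥ r/α}`. -/
theorem bk_tendsto_alphaStar
    (α : ℝ) (hα : α ∈ Set.Ioo (0:ℝ) 1)
    (a : ℝ → ℝ) (ha_cont : ContinuousOn a (Set.Icc 0 1))
    (ha_maps : Set.MapsTo a (Set.Icc 0 1) (Set.Icc 0 1))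
    (ak : ℕ → ℝ → ℝ) (hak_maps : ∀ k, Set.MapsTo (ak k) (Set.Icc 0 1) (Set.Icc 0 1))
    (hunif : TendstoUniformlyOn ak a atTop (Set.Icc 0 1))
    (αStar : ℝ) (hαStar : αStar = sSup {r ∈ Set.Icc (0:ℝ) 1 | r / α ≤ a r})
    (b : ℕ → ℝ) (hb : ∀ k, b k = sSup {r ∈ Set.Icc (0:ℝ) 1 | r / α ≤ ak k r})
    (ha2 : 0 < αStar → ∀ O : Set ℝ, IsOpen O → αStar ∈ O →
      ∃ s₁ ∈ O ∩ Set.Icc (0:ℝ) 1, ∃ s₂ ∈ O ∩ Set.Icc (0:ℝ) 1,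
        s₁ / α < a s₁ ∧ a s₂ < s₂ / α) :
    Tendsto b atTop (nhds αStar) := by
  have hbdd : ∀ f : ℝ → ℝ, BddAbove {r ∈ Set.Icc (0:ℝ) 1 | r / α ≤ f r} :=
    fun f => ⟨1, fun r hr => hr.1.2⟩
  have hzero : ∀ f : ℝ → ℝ, Set.MapsTo f (Set.Icc 0 1) (Set.Icc 0 1) →
      (0:ℝ) ∈ {r ∈ Set.Icc (0:ℝ) 1 | r / α ≤ f r} := by
    intro f hf
    have h0 : (0:ℝ) ∈ Set.Icc (0:ℝ) 1 := ⟨le_refl _, zero_le_one⟩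
    refine ⟨h0, ?_⟩
    rw [zero_div]
    exact (hf h0).1
  have hb0 : ∀ k, 0 ≤ b k := by
    intro k
    rw [hb k]
    exact le_csSup (hbdd _) (hzero _ (hak_maps k))
  have hs0 : 0 ≤ αStar := by
    rw [hαStar]
    exact le_csSup (hbdd _) (hzero _ ha_maps)
  rw [Metric.tendstoUniformlyOn_iff] at hunif
  rw [tendsto_order]
  constructor
  · intro c hc
    rcases hs0.eq_or_lt with h | h
    · exact Eventually.of_forall fun k => lt_of_lt_of_le (h ▸ hc) (hb0 k)
    · obtain ⟨s, ⟨hsO, hsI⟩, _, _, hs, _⟩ := ha2 h (Set.Ioi c) isOpen_Ioi hc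
      filter_upwards [hunif (a s - s / α) (by linarith)] with k hk
      have h1 := hk s hsI
      rw [Real.dist_eq] at h1
      have h2 := (abs_lt.1 h1).2
      refine lt_of_lt_of_le hsO ?_
      rw [hb k]
      exact le_csSup (hbdd _) ⟨hsI, by linarith⟩
  · intro c hc
    obtain ⟨d, hd, hdc⟩ := exists_between hc
    have hsub : Set.Icc d 1 ⊆ Set.Icc (0:ℝ) 1 := Set.Icc_subset_Icc_left (by linarith)
    have key : ∃ m > 0, ∀ r ∈ Set.Icc d 1, m ≤ r / α - a r := by
      rcases (Set.Icc d 1).eq_empty_or_nonempty with he | hne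
      · exact ⟨1, one_pos, by simp [he]⟩
      · obtain ⟨x, hx, hmin⟩ := isCompact_Icc.exists_isMinOn hne
          (f := fun r => r / α - a r)
          (((continuous_id.div_const α).continuousOn).sub (ha_cont.mono hsub))
        refine ⟨x / α - a x, ?_, fun r hr => hmin hr⟩
        by_contra hcon
        have : x ≤ αStar := by
          rw [hαStar]
          exact le_csSup (hbdd _) ⟨hsub hx, by linarith⟩
        linarith [hx.1]
    obtain ⟨m, hm, hmr⟩ := key
    filter_upwards [hunif m hm] with k hk
    refine lt_of_le_of_lt ?_ hdc
    rw [hb k]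
    refine csSup_le ⟨0, hzero _ (hak_maps k)⟩ ?_
    rintro r ⟨hrI, hr⟩
    by_contra hcon
    have h1 := hk r hrI
    rw [Real.dist_eq] at h1
    have h2 := (abs_lt.1 h1).1
    have h3 := hmr r ⟨by linarith, hrI.2⟩
    linarith
end

section
/- Assume (G1) and (a1)–(a3) hold. Then for every t ∈ ⋃_m S_m with p(t) ≠ α*, the sequence of truth values of the event (t ∈ S_k and p(t) ≤ b_k) is eventually constant in k; that is, the null hypothesis at t is eventually always rejected, or eventually always accepted, by the step-k Benjamini–Hochberg procedures. -/
open Filter Set MeasureTheory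
open scoped Classical

/-- under the grid approximation assumption (G1) and the regularity assumptions
(a1)–(a3), for every grid point `t ∈ ⋃ m, S m` with `p t ≠ α*`, the event
`(t ∈ S k ∧ p t ≤ b k)` is eventually constant in `k`: the null hypothesis at `t` is eventually
always rejected, or eventually always accepted, by the step-`k` BH procedures. -/
theorem fBH_eventually_rejected_or_accepted {d : ℕ}
    (T : Set (EuclideanSpace ℝ (Fin d)))
    (hT_open : IsOpen T) (hT_bdd : Bornology.IsBounded T) (hT_ne : T.Nonempty)
    (hT_norm : volume T = 1)
    (p : EuclideanSpace ℝ (Fin d) → ℝ) (hp_meas : Measurable p)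
    (hp_val : ∀ t ∈ T, p t ∈ Set.Icc (0:ℝ) 1)
    (α : ℝ) (hα : α ∈ Set.Ioo (0:ℝ) 1)
    -- cumulated p-value function and adjusted threshold
    (a : ℝ → ℝ) (ha : ∀ r, a r = (volume {s ∈ T | p s ≤ r}).toReal)
    (αStar : ℝ) (hαStar : αStar = sSup {r ∈ Set.Icc (0:ℝ) 1 | r / α ≤ a r})
    -- nested grids and empirical quantities
    (S : ℕ → Finset (EuclideanSpace ℝ (Fin d)))
    (hS_ne : ∀ k, (S k).Nonempty) (hS_sub : ∀ k, ↑(S k) ⊆ T)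
    (hS_mono : ∀ k, S k ⊆ S (k + 1))
    (ak : ℕ → ℝ → ℝ)
    (hak : ∀ k r, ak k r = (((S k).filter (fun s => p s ≤ r)).card : ℝ) / (S k).card)
    (b : ℕ → ℝ) (hb : ∀ k, b k = sSup {r ∈ Set.Icc (0:ℝ) 1 | r / α ≤ ak k r})
    -- (G1)
    (hG1 : TendstoUniformlyOn ak a atTop (Set.Icc 0 1))
    -- (a1)
    (ha1 : ∀ t ∈ Set.Icc (0:ℝ) 1, volume {s ∈ T | p s = t} = 0)
    -- (a2)
    (ha2 : αStar ∈ Set.Ioc 0 α → ∀ O : Set ℝ, IsOpen O → αStar ∈ O →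
      ∃ s₁ ∈ O ∩ Set.Icc (0:ℝ) 1, ∃ s₂ ∈ O ∩ Set.Icc (0:ℝ) 1,
        s₁ / α < a s₁ ∧ a s₂ < s₂ / α)
    -- (a3)
    (ha3 : αStar = 0 → 0 < sInf (p '' T)) :
    ∀ t ∈ ⋃ m, (S m : Set (EuclideanSpace ℝ (Fin d))), p t ≠ αStar →
      (∃ K, ∀ k ≥ K, t ∈ S k ∧ p t ≤ b k) ∨
      (∃ K, ∀ k ≥ K, ¬(t ∈ S k ∧ p t ≤ b k)) := by
  obtain ⟨hα0, hα1⟩ := hα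
  have : IsProbabilityMeasure (volume.restrict T) := ⟨by simp [hT_norm]⟩
  have : IsProbabilityMeasure ((volume.restrict T).map p) :=
    Measure.isProbabilityMeasure_map hp_meas.aemeasurable
  have hcdf : ∀ r, a r = ProbabilityTheory.cdf ((volume.restrict T).map p) r := by
    intro r
    rw [ProbabilityTheory.cdf_eq_real, ha, Measure.real,
      Measure.map_apply hp_meas measurableSet_Iic,
      Measure.restrict_apply (hp_meas measurableSet_Iic), Set.inter_comm]
    rfl
  have hle1 : ∀ r, a r ≤ 1 := fun r => by
    rw [hcdf]; exact ProbabilityTheory.cdf_le_one _ r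
  have hge0 : ∀ r, 0 ≤ a r := fun r => by
    rw [hcdf]; exact ProbabilityTheory.cdf_nonneg _ r
  have hmono : Monotone a := by
    intro x y hxy
    rw [hcdf, hcdf]; exact ProbabilityTheory.monotone_cdf _ hxy
  have husc : UpperSemicontinuous a := by
    intro x y hy
    have hrc : ContinuousWithinAt a (Set.Ici x) x := by
      rw [funext hcdf]; exact (ProbabilityTheory.cdf _).right_continuous x
    have h1 : ∀ᶠ z in nhdsWithin x (Set.Ici x), a z < y := hrc.eventually_lt_const hy
    rw [eventually_nhdsWithin_iff] at h1
    filter_upwards [h1] with z hz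
    rcases le_total x z with h | h
    · exact hz h
    · exact (hmono h).trans_lt hy
  have hbdd : ∀ P : ℝ → Prop, BddAbove {r ∈ Set.Icc (0:ℝ) 1 | P r} :=
    fun P => ⟨1, fun r hr => hr.1.2⟩
  have hst0 : 0 ≤ αStar := by
    rw [hαStar]
    exact le_csSup (hbdd _) ⟨⟨le_rfl, zero_le_one⟩, by simpa using hge0 0⟩
  have hstα : αStar ≤ α := by
    rw [hαStar]
    refine csSup_le ⟨0, ⟨le_rfl, zero_le_one⟩, by simpa using hge0 0⟩ ?_
    rintro r ⟨_, hr⟩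
    have := hr.trans (hle1 r)
    rwa [div_le_one hα0] at this
  have hSm : Monotone S := monotone_nat_of_le_succ hS_mono
  rw [Metric.tendstoUniformlyOn_iff] at hG1
  intro t ht hne
  obtain ⟨m, hm⟩ := Set.mem_iUnion.1 ht
  have hpt := hp_val t (hS_sub m hm)
  rcases lt_or_gt_of_ne hne with hlt | hgt
  · left
    obtain ⟨s, ⟨hsO, hsI⟩, _, _, hs, _⟩ := ha2 ⟨hpt.1.trans_lt hlt, hstα⟩ (Set.Ioi (p t)) isOpen_Ioi hlt
    obtain ⟨K, hK⟩ := eventually_atTop.1 (hG1 _ (sub_pos.2 hs))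
    refine ⟨max K m, fun k hk => ⟨hSm ((le_max_right _ _).trans hk) hm, ?_⟩⟩
    have h := hK k ((le_max_left _ _).trans hk) s hsI
    rw [Real.dist_eq] at h
    have h2 := (abs_lt.1 h).2
    rw [hb]
    exact (le_of_lt hsO).trans (le_csSup (hbdd _) ⟨hsI, by linarith⟩)
  · right
    obtain ⟨q, hq1, hq2⟩ := exists_between hgt
    have hq : (Set.Icc q 1).Nonempty := ⟨1, hq2.le.trans hpt.2, le_rfl⟩
    have hf : UpperSemicontinuousOn (fun r => a r + -(r / α)) (Set.Icc q 1) :=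
      (husc.add (Continuous.upperSemicontinuous (by fun_prop))).upperSemicontinuousOn _
    obtain ⟨r₀, hr₀, hmax⟩ := hf.exists_isMaxOn hq isCompact_Icc
    have hneg : a r₀ < r₀ / α := by
      by_contra! hcon
      have : r₀ ≤ αStar := by
        rw [hαStar]
        exact le_csSup (hbdd _) ⟨⟨by linarith [hr₀.1], hr₀.2⟩, hcon⟩
      linarith [hr₀.1]
    obtain ⟨K, hK⟩ := eventually_atTop.1 (hG1 _ (sub_pos.2 hneg))
    refine ⟨K, fun k hk hcon => ?_⟩
    have hbk : b k ≤ q := by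
      rw [hb]
      refine csSup_le ⟨0, ⟨le_rfl, zero_le_one⟩, by rw [hak, zero_div]; positivity⟩ ?_
      rintro r ⟨hrI, hr⟩
      by_contra! hqr
      have h := hK k hk r hrI
      rw [Real.dist_eq] at h
      have h2 := (abs_lt.1 h).1
      have h3 : a r + -(r / α) ≤ a r₀ + -(r₀ / α) := hmax ⟨hqr.le, hrI.2⟩
      linarith
    linarith [hcon.2]
end

section
/- Assume (G1), (G2) and (a1)–(a3) hold. Then #A_k/#S_k → μ({t ∈ T : p(t) ≤ α*}) and #(A_k ∩ U)/#S_k → μ(U ∩ {t ∈ T : p(t) ≤ α*}) as k → ∞. -/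
open Filter Set MeasureTheory
open scoped Classical

theorem cum_continuousAt {d : ℕ} (V : Set (EuclideanSpace ℝ (Fin d)))
    (hV : MeasurableSet V) (hVf : volume V ≠ ⊤)
    (p : EuclideanSpace ℝ (Fin d) → ℝ) (hp : Measurable p) (t : ℝ)
    (h0 : volume (V ∩ {s | p s = t}) = 0) :
    ContinuousAt (fun r => (volume (V ∩ {s | p s ≤ r})).toReal) t := by
  have hm : ∀ r, MeasurableSet (V ∩ {s | p s ≤ r}) := fun r =>
    hV.inter (measurableSet_le hp measurable_const)
  have hne : volume (V ∩ {s | p s ≤ t}) ≠ ⊤ :=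
    ne_top_of_le_ne_top hVf (measure_mono Set.inter_subset_left)
  refine (ENNReal.tendsto_toReal hne).comp ?_
  refine tendsto_measure_of_ae_tendsto_indicator (μ := volume) (nhds t) (hm t) hm (B := V) hV hVf
    (Eventually.of_forall fun r => Set.inter_subset_left) ?_
  have : ∀ᵐ x ∂(volume : Measure (EuclideanSpace ℝ (Fin d))), x ∉ V ∩ {s | p s = t} :=
    measure_eq_zero_iff_ae_notMem.1 h0
  filter_upwards [this] with x hx
  by_cases hxV : x ∈ V
  · have hxt : p x ≠ t := fun h => hx ⟨hxV, h⟩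
    rcases lt_or_gt_of_ne hxt with h | h
    · filter_upwards [lt_mem_nhds h] with r hr
      simp [hxV, hr.le, h.le]
    · filter_upwards [gt_mem_nhds h] with r hr
      simp [hxV, not_le.2 hr, not_le.2 h]
  · exact Eventually.of_forall fun r => by simp [hxV]

/-- under the grid approximation assumptions (G1), (G2) and the regularity
assumptions (a1)–(a3), the proportions of rejected grid points converge:
`#A_k/#S_k → μ {t ∈ T : p t ≤ α*}` and `#(A_k ∩ U)/#S_k → μ (U ∩ {t : p t ≤ α*})`,
where `A_k = {t ∈ S_k : p t ≤ b_k}` is the step-`k` rejection set. -/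
theorem fBH_rejection_proportions_tendsto {d : ℕ}
    (T : Set (EuclideanSpace ℝ (Fin d)))
    (hT_open : IsOpen T) (hT_bdd : Bornology.IsBounded T) (hT_ne : T.Nonempty)
    (hT_norm : volume T = 1)
    (p : EuclideanSpace ℝ (Fin d) → ℝ) (hp_meas : Measurable p)
    (hp_val : ∀ t ∈ T, p t ∈ Set.Icc (0:ℝ) 1)
    (α : ℝ) (hα : α ∈ Set.Ioo (0:ℝ) 1)
    -- cumulated p-value function and adjusted threshold
    (a : ℝ → ℝ) (ha : ∀ r, a r = (volume {s ∈ T | p s ≤ r}).toReal)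
    (αStar : ℝ) (hαStar : αStar = sSup {r ∈ Set.Icc (0:ℝ) 1 | r / α ≤ a r})
    -- nested grids and empirical quantities
    (S : ℕ → Finset (EuclideanSpace ℝ (Fin d)))
    (hS_ne : ∀ k, (S k).Nonempty) (hS_sub : ∀ k, ↑(S k) ⊆ T)
    (hS_mono : ∀ k, S k ⊆ S (k + 1))
    (ak : ℕ → ℝ → ℝ)
    (hak : ∀ k r, ak k r = (((S k).filter (fun s => p s ≤ r)).card : ℝ) / (S k).card)
    (b : ℕ → ℝ) (hb : ∀ k, b k = sSup {r ∈ Set.Icc (0:ℝ) 1 | r / α ≤ ak k r})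
    -- (G1)
    (hG1 : TendstoUniformlyOn ak a atTop (Set.Icc 0 1))
    -- true-null region and (G2)
    (U : Set (EuclideanSpace ℝ (Fin d))) (hU_sub : U ⊆ T) (hU_meas : MeasurableSet U)
    (aU : ℝ → ℝ) (haU : ∀ r, aU r = (volume (U ∩ {s | p s ≤ r})).toReal)
    (aUk : ℕ → ℝ → ℝ)
    (haUk : ∀ k r, aUk k r =
      (((S k).filter (fun s => s ∈ U ∧ p s ≤ r)).card : ℝ) / (S k).card)
    (hG2 : TendstoUniformlyOn aUk aU atTop (Set.Icc 0 1))
    -- (a1)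
    (ha1 : ∀ t ∈ Set.Icc (0:ℝ) 1, volume {s ∈ T | p s = t} = 0)
    -- (a2)
    (ha2 : αStar ∈ Set.Ioc 0 α → ∀ O : Set ℝ, IsOpen O → αStar ∈ O →
      ∃ s₁ ∈ O ∩ Set.Icc (0:ℝ) 1, ∃ s₂ ∈ O ∩ Set.Icc (0:ℝ) 1,
        s₁ / α < a s₁ ∧ a s₂ < s₂ / α)
    -- (a3)
    (ha3 : αStar = 0 → 0 < sInf (p '' T))
    -- step-k rejection sets
    (A : ℕ → Finset (EuclideanSpace ℝ (Fin d)))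
    (hA : ∀ k, A k = (S k).filter (fun t => p t ≤ b k)) :
    Tendsto (fun k => ((A k).card : ℝ) / (S k).card) atTop
      (nhds (volume {t ∈ T | p t ≤ αStar}).toReal) ∧
    Tendsto (fun k => (((A k).filter (fun t => t ∈ U)).card : ℝ) / (S k).card) atTop
      (nhds (volume (U ∩ {t | p t ≤ αStar})).toReal) := by
  obtain ⟨hα0, hα1⟩ := hα
  have hT_meas := hT_open.measurableSet
  have hTf : volume T ≠ ⊤ := by rw [hT_norm]; exact ENNReal.one_ne_top
  have hUf : volume U ≠ ⊤ := ne_top_of_le_ne_top hTf (measure_mono hU_sub)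
  have hac : ∀ t ∈ Set.Icc (0:ℝ) 1, ContinuousAt a t := by
    intro t ht
    have : a = fun r => (volume (T ∩ {s | p s ≤ r})).toReal := funext ha
    rw [this]
    exact cum_continuousAt T hT_meas hTf p hp_meas t (ha1 t ht)
  have hUc : ∀ t ∈ Set.Icc (0:ℝ) 1, ContinuousAt aU t := by
    intro t ht
    have : aU = fun r => (volume (U ∩ {s | p s ≤ r})).toReal := funext haU
    rw [this]
    exact cum_continuousAt U hU_meas hUf p hp_meas t
      (measure_mono_null (Set.inter_subset_inter_left _ hU_sub) (ha1 t ht))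
  have ha_nonneg : ∀ r, 0 ≤ a r := fun r => by rw [ha]; exact ENNReal.toReal_nonneg
  have ha_le : ∀ r, a r ≤ 1 := fun r => by
    rw [ha, ← ENNReal.toReal_one]
    refine ENNReal.toReal_mono ENNReal.one_ne_top ?_
    rw [← hT_norm]
    exact measure_mono fun x hx => hx.1
  have hak_nonneg : ∀ k r, 0 ≤ ak k r := fun k r => by rw [hak]; positivity
  have hbdd : ∀ f : ℝ → ℝ, BddAbove {r ∈ Set.Icc (0:ℝ) 1 | r / α ≤ f r} :=
    fun f => ⟨1, fun r hr => hr.1.2⟩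
  have h0mem : ∀ f : ℝ → ℝ, 0 ≤ f 0 → (0:ℝ) ∈ {r ∈ Set.Icc (0:ℝ) 1 | r / α ≤ f r} :=
    fun f hf => ⟨⟨le_rfl, zero_le_one⟩, by simpa using hf⟩
  have hs0 : 0 ≤ αStar := by
    rw [hαStar]; exact le_csSup (hbdd a) (h0mem a (ha_nonneg 0))
  have hsα : αStar ≤ α := by
    rw [hαStar]
    refine csSup_le ⟨0, h0mem a (ha_nonneg 0)⟩ fun r hr => ?_
    have h1 := hr.2.trans (ha_le r)
    rwa [div_le_one hα0] at h1
  have hsI : αStar ∈ Set.Icc (0:ℝ) 1 := ⟨hs0, hsα.trans hα1.le⟩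
  have hbI : ∀ k, b k ∈ Set.Icc (0:ℝ) 1 := fun k => by
    rw [hb]
    exact ⟨le_csSup (hbdd (ak k)) (h0mem _ (hak_nonneg k 0)),
      csSup_le ⟨0, h0mem _ (hak_nonneg k 0)⟩ fun r hr => hr.1.2⟩
  have hupper : ∀ c, αStar < c → ∀ᶠ k in atTop, b k ≤ c := by
    intro c hc
    have hsub : Set.Icc c 1 ⊆ Set.Icc (0:ℝ) 1 := Set.Icc_subset_Icc_left (hs0.trans hc.le)
    rcases lt_or_ge 1 c with h1 | h1
    · exact Eventually.of_forall fun k => (hbI k).2.trans h1.le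
    have hcont : ContinuousOn (fun r => r / α - a r) (Set.Icc c 1) := fun r hr =>
      ((continuousAt_id.div_const α).sub (hac r (hsub hr))).continuousWithinAt
    obtain ⟨m, hm, hmin⟩ := isCompact_Icc.exists_isMinOn (Set.nonempty_Icc.2 h1) hcont
    have hpos : 0 < m / α - a m := by
      by_contra hcon
      have : m ≤ αStar := by
        rw [hαStar]
        exact le_csSup (hbdd a) ⟨hsub hm, by linarith⟩
      linarith [hm.1]
    filter_upwards [Metric.tendstoUniformlyOn_iff.1 hG1 _ hpos] with k hk
    rw [hb]
    refine csSup_le ⟨0, h0mem _ (hak_nonneg k 0)⟩ fun r hr => ?_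
    by_contra hrc
    have hrI : r ∈ Set.Icc c 1 := ⟨(not_le.1 hrc).le, hr.1.2⟩
    have h2 : m / α - a m ≤ r / α - a r := hmin hrI
    have h3 := hk r hr.1
    rw [Real.dist_eq, abs_lt] at h3
    have h4 : r / α ≤ ak k r := hr.2
    linarith [h3.1]
  have hlower : ∀ c, c < αStar → ∀ᶠ k in atTop, c < b k := by
    intro c hc
    rcases hs0.eq_or_lt with h0 | h0
    · exact Eventually.of_forall fun k => lt_of_lt_of_le (by linarith) (hbI k).1
    obtain ⟨s₁, ⟨hs1, hs1I⟩, -, -, hlt, -⟩ := ha2 ⟨h0, hsα⟩ (Set.Ioi c) isOpen_Ioi hc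
    filter_upwards [(hG1.tendsto_at hs1I).eventually_const_lt hlt] with k hk
    refine lt_of_lt_of_le hs1 ?_
    rw [hb]
    exact le_csSup (hbdd _) ⟨hs1I, hk.le⟩
  have hbt : Tendsto b atTop (nhds αStar) := by
    refine tendsto_order.2 ⟨hlower, fun c hc => ?_⟩
    obtain ⟨c', h1, h2⟩ := exists_between hc
    filter_upwards [hupper c' h1] with k hk using hk.trans_lt h2
  have hgen : ∀ (F : ℕ → ℝ → ℝ) (f : ℝ → ℝ), TendstoUniformlyOn F f atTop (Set.Icc 0 1) →
      ContinuousAt f αStar → Tendsto (fun k => F k (b k)) atTop (nhds (f αStar)) := by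
    intro F f hF hf
    have h1 : Tendsto (fun k => f (b k)) atTop (nhds (f αStar)) := hf.tendsto.comp hbt
    rw [Metric.tendsto_nhds]
    intro ε hε
    filter_upwards [Metric.tendsto_nhds.1 h1 (ε/2) (half_pos hε),
      Metric.tendstoUniformlyOn_iff.1 hF (ε/2) (half_pos hε)] with k hk1 hk2
    have h3 := hk2 _ (hbI k)
    rw [dist_comm] at h3
    linarith [dist_triangle (F k (b k)) (f (b k)) (f αStar)]
  constructor
  · have := hgen ak a hG1 (hac _ hsI)
    rw [ha] at this
    refine this.congr fun k => ?_
    rw [hak, hA]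
  · have := hgen aUk aU hG2 (hUc _ hsI)
    rw [haU] at this
    refine this.congr fun k => ?_
    rw [haUk, hA, Finset.filter_filter]
    simp only [and_comm]
end

section
/- Assume (G1) and (a1) hold, α* = 0, and inf_{t∈T} p(t) > 0. Then the step-k rejection set is eventually empty: there exists K such that A_k = {t ∈ S_k : p(t) ≤ b_k} = ∅ for all k ≥ K. -/
open Filter Set MeasureTheory
open scoped Classical

/-- under the grid approximation assumption (G1) and regularity assumption (a1),
if `α* = 0` and `inf_{t ∈ T} p t > 0`, then the step-`k` rejection set
`A_k = {t ∈ S_k : p t ≤ b_k}` is eventually empty. -/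
theorem fBH_rejection_set_eventually_empty {d : ℕ}
    (T : Set (EuclideanSpace ℝ (Fin d)))
    (hT_open : IsOpen T) (hT_bdd : Bornology.IsBounded T) (hT_ne : T.Nonempty)
    (hT_norm : volume T = 1)
    (p : EuclideanSpace ℝ (Fin d) → ℝ) (hp_meas : Measurable p)
    (hp_val : ∀ t ∈ T, p t ∈ Set.Icc (0:ℝ) 1)
    (α : ℝ) (hα : α ∈ Set.Ioo (0:ℝ) 1)
    -- cumulated p-value function and adjusted threshold
    (a : ℝ → ℝ) (ha : ∀ r, a r = (volume {s ∈ T | p s ≤ r}).toReal)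
    (αStar : ℝ) (hαStar : αStar = sSup {r ∈ Set.Icc (0:ℝ) 1 | r / α ≤ a r})
    -- nested grids and empirical quantities
    (S : ℕ → Finset (EuclideanSpace ℝ (Fin d)))
    (hS_ne : ∀ k, (S k).Nonempty) (hS_sub : ∀ k, ↑(S k) ⊆ T)
    (hS_mono : ∀ k, S k ⊆ S (k + 1))
    (ak : ℕ → ℝ → ℝ)
    (hak : ∀ k r, ak k r = (((S k).filter (fun s => p s ≤ r)).card : ℝ) / (S k).card)
    (b : ℕ → ℝ) (hb : ∀ k, b k = sSup {r ∈ Set.Icc (0:ℝ) 1 | r / α ≤ ak k r})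
    -- (G1)
    (hG1 : TendstoUniformlyOn ak a atTop (Set.Icc 0 1))
    -- (a1)
    (ha1 : ∀ t ∈ Set.Icc (0:ℝ) 1, volume {s ∈ T | p s = t} = 0)
    -- α* = 0 and the infimum of p over T is positive
    (hαStar0 : αStar = 0)
    (hinf : 0 < sInf (p '' T)) :
    ∃ K, ∀ k ≥ K, (S k).filter (fun t => p t ≤ b k) = ∅ := by
  obtain ⟨hα0, hα1⟩ := hα
  set m := sInf (p '' T) with hm
  have hbdd : BddBelow (p '' T) := ⟨0, by rintro _ ⟨t, ht, rfl⟩; exact (hp_val t ht).1⟩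
  have hmle : ∀ t ∈ T, m ≤ p t := fun t ht => csInf_le hbdd ⟨t, ht, rfl⟩
  have hm1 : m ≤ 1 := by
    obtain ⟨t, ht⟩ := hT_ne
    exact (hmle t ht).trans (hp_val t ht).2
  have hfin : ∀ r, volume {s ∈ T | p s ≤ r} ≠ ⊤ := fun r =>
    ne_top_of_le_ne_top (by rw [hT_norm]; simp) (measure_mono (Set.sep_subset T _))
  haveI : IsProbabilityMeasure (volume.restrict T) := ⟨by simp [hT_norm]⟩
  haveI : IsProbabilityMeasure ((volume.restrict T).map p) :=
    Measure.isProbabilityMeasure_map hp_meas.aemeasurable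
  have hcdf : ∀ r, a r = ProbabilityTheory.cdf ((volume.restrict T).map p) r := by
    intro r
    rw [ha, ProbabilityTheory.cdf_eq_real, Measure.real, Measure.map_apply hp_meas measurableSet_Iic,
      Measure.restrict_apply (hp_meas measurableSet_Iic)]
    congr 2
    ext s
    simp [and_comm]
  have hmono : Monotone a := by
    intro x y h
    rw [hcdf, hcdf]
    exact ProbabilityTheory.monotone_cdf _ h
  have husc : UpperSemicontinuous a := by
    intro x y hy
    have hr : ContinuousWithinAt a (Ici x) x := by
      have : a = ProbabilityTheory.cdf ((volume.restrict T).map p) := funext hcdf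
      rw [this]
      exact (ProbabilityTheory.cdf _).right_continuous x
    have h1 : ∀ᶠ z in nhdsWithin x (Ici x), a z < y := hr.eventually (gt_mem_nhds hy)
    rw [eventually_nhdsWithin_iff] at h1
    filter_upwards [h1] with z hz
    rcases le_total x z with h | h
    · exact hz h
    · exact (hmono h).trans_lt hy
  have husc2 : UpperSemicontinuous (fun r => a r + (-(r / α))) :=
    husc.add (Continuous.upperSemicontinuous (by fun_prop))
  obtain ⟨x0, hx0, hmax⟩ := (husc2.upperSemicontinuousOn (Icc m 1)).exists_isMaxOn
    (nonempty_Icc.2 hm1) isCompact_Icc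
  have hneg : a x0 + (-(x0 / α)) < 0 := by
    by_contra hcon
    have hmem : x0 ∈ {r ∈ Set.Icc (0:ℝ) 1 | r / α ≤ a r} :=
      ⟨⟨hinf.le.trans hx0.1, hx0.2⟩, by linarith⟩
    have := le_csSup ⟨1, fun r hr => hr.1.2⟩ hmem
    have := hx0.1
    linarith
  rw [Metric.tendstoUniformlyOn_iff] at hG1
  obtain ⟨K, hK⟩ := eventually_atTop.1 (hG1 (-(a x0 + (-(x0 / α)))) (by linarith))
  refine ⟨K, fun k hk => ?_⟩
  have hbk : b k ≤ 0 := by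
    rw [hb]
    refine Real.sSup_le ?_ le_rfl
    rintro r ⟨hr, hr2⟩
    rcases lt_or_ge r m with h | h
    · have he : (S k).filter (fun s => p s ≤ r) = ∅ := by
        refine Finset.filter_eq_empty_iff.2 fun s hs hle => ?_
        have := hmle s (hS_sub k hs)
        linarith
      rw [hak, he] at hr2
      simp only [Finset.card_empty, Nat.cast_zero, zero_div] at hr2
      by_contra hc
      have : 0 < r / α := div_pos (not_le.1 hc) hα0
      linarith
    · exfalso
      have h1 := hK k hk r hr
      rw [Real.dist_eq, abs_lt] at h1
      have h2 : a r + (-(r / α)) ≤ a x0 + (-(x0 / α)) := hmax ⟨h, hr.2⟩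
      linarith [h1.1]
  refine Finset.filter_eq_empty_iff.2 fun s hs hle => ?_
  have := hmle s (hS_sub k hs)
  linarith
end

section
/- Assume (G1), (G2) and (a1)–(a3) hold. Then the step-k false discovery proportions of the finite Benjamini–Hochberg procedures converge to the limiting false discovery proportion of the functional Benjamini–Hochberg procedure: Q_k → Q as k → ∞. -/
open Filter Set MeasureTheory
open scoped Classical

lemma aux_cont {E : Type*} [MeasurableSpace E] (μ : Measure E) [IsFiniteMeasure μ]
    (p : E → ℝ) (hp : Measurable p) (t : ℝ) (h : μ {s | p s = t} = 0) :
    ContinuousAt (fun r => (μ {s | p s ≤ r}).toReal) t := by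
  have h1 : Tendsto (fun r => μ {s | p s ≤ r}) (nhds t) (nhds (μ {s | p s ≤ t})) := by
    apply tendsto_measure_of_ae_tendsto_indicator_of_isFiniteMeasure
    · exact measurableSet_le hp measurable_const
    · intro r; exact measurableSet_le hp measurable_const
    · have : ∀ᵐ x ∂μ, p x ≠ t := by
        rw [ae_iff]; simpa using h
      filter_upwards [this] with x hx
      rcases lt_or_gt_of_ne hx with h | h
      · filter_upwards [lt_mem_nhds h] with r hr
        exact ⟨fun _ => h.le, fun _ => hr.le⟩
      · filter_upwards [gt_mem_nhds h] with r hr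
        exact ⟨fun hh => absurd hh (not_le.2 hr), fun hh => absurd hh (not_le.2 h)⟩
  exact (ENNReal.tendsto_toReal (measure_ne_top _ _)).comp h1

/-- under the grid approximation assumptions (G1), (G2) and the regularity
assumptions (a1)–(a3), the step-`k` false discovery proportions of the finite BH procedures
converge to the limiting false discovery proportion of the functional BH procedure:
`Q_k → Q`, where `Q_k = #(A_k ∩ U)/#A_k` if `A_k ≠ ∅` (else `0`), with
`A_k = {t ∈ S_k : p t ≤ b_k}`, and `Q = μ(U ∩ {t : p t ≤ α*})/μ{t ∈ T : p t ≤ α*}` if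
`μ{t ∈ T : p t ≤ α*} > 0` (else `0`). -/
theorem fBH_fdp_tendsto {d : ℕ}
    (T : Set (EuclideanSpace ℝ (Fin d)))
    (hT_open : IsOpen T) (hT_bdd : Bornology.IsBounded T) (hT_ne : T.Nonempty)
    (hT_norm : volume T = 1)
    (p : EuclideanSpace ℝ (Fin d) → ℝ) (hp_meas : Measurable p)
    (hp_val : ∀ t ∈ T, p t ∈ Set.Icc (0:ℝ) 1)
    (α : ℝ) (hα : α ∈ Set.Ioo (0:ℝ) 1)
    -- cumulated p-value function and adjusted threshold
    (a : ℝ → ℝ) (ha : ∀ r, a r = (volume {s ∈ T | p s ≤ r}).toReal)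
    (αStar : ℝ) (hαStar : αStar = sSup {r ∈ Set.Icc (0:ℝ) 1 | r / α ≤ a r})
    -- nested grids and empirical quantities
    (S : ℕ → Finset (EuclideanSpace ℝ (Fin d)))
    (hS_ne : ∀ k, (S k).Nonempty) (hS_sub : ∀ k, ↑(S k) ⊆ T)
    (hS_mono : ∀ k, S k ⊆ S (k + 1))
    (ak : ℕ → ℝ → ℝ)
    (hak : ∀ k r, ak k r = (((S k).filter (fun s => p s ≤ r)).card : ℝ) / (S k).card)
    (b : ℕ → ℝ) (hb : ∀ k, b k = sSup {r ∈ Set.Icc (0:ℝ) 1 | r / α ≤ ak k r})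
    -- (G1)
    (hG1 : TendstoUniformlyOn ak a atTop (Set.Icc 0 1))
    -- true-null region and (G2)
    (U : Set (EuclideanSpace ℝ (Fin d))) (hU_sub : U ⊆ T) (hU_meas : MeasurableSet U)
    (aU : ℝ → ℝ) (haU : ∀ r, aU r = (volume (U ∩ {s | p s ≤ r})).toReal)
    (aUk : ℕ → ℝ → ℝ)
    (haUk : ∀ k r, aUk k r =
      (((S k).filter (fun s => s ∈ U ∧ p s ≤ r)).card : ℝ) / (S k).card)
    (hG2 : TendstoUniformlyOn aUk aU atTop (Set.Icc 0 1))
    -- (a1)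
    (ha1 : ∀ t ∈ Set.Icc (0:ℝ) 1, volume {s ∈ T | p s = t} = 0)
    -- (a2)
    (ha2 : αStar ∈ Set.Ioc 0 α → ∀ O : Set ℝ, IsOpen O → αStar ∈ O →
      ∃ s₁ ∈ O ∩ Set.Icc (0:ℝ) 1, ∃ s₂ ∈ O ∩ Set.Icc (0:ℝ) 1,
        s₁ / α < a s₁ ∧ a s₂ < s₂ / α)
    -- (a3)
    (ha3 : αStar = 0 → 0 < sInf (p '' T))
    -- step-k rejection sets
    (A : ℕ → Finset (EuclideanSpace ℝ (Fin d)))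
    (hA : ∀ k, A k = (S k).filter (fun t => p t ≤ b k))
    -- step-k false discovery proportions
    (Qk : ℕ → ℝ)
    (hQk : ∀ k, Qk k = if (A k).Nonempty
      then (((A k).filter (fun t => t ∈ U)).card : ℝ) / (A k).card else 0)
    -- limiting false discovery proportion
    (Q : ℝ)
    (hQ : Q = if 0 < volume {t ∈ T | p t ≤ αStar}
      then (volume (U ∩ {t | p t ≤ αStar})).toReal / (volume {t ∈ T | p t ≤ αStar}).toReal
      else 0) :
    Tendsto Qk atTop (nhds Q) := by
  have hα0 : 0 < α := hα.1
  have hα1 : α < 1 := hα.2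
  have hTfin : volume T ≠ ⊤ := by rw [hT_norm]; simp
  have hUfin : volume U ≠ ⊤ := ((measure_mono hU_sub).trans_lt hTfin.lt_top).ne
  haveI : IsFiniteMeasure (volume.restrict T) := ⟨by simpa using hTfin.lt_top⟩
  haveI : IsFiniteMeasure (volume.restrict U) := ⟨by simpa using hUfin.lt_top⟩
  have hmle : ∀ r, MeasurableSet {s | p s ≤ r} := fun r => measurableSet_le hp_meas measurable_const
  have hmeq : ∀ r, MeasurableSet {s | p s = r} := fun r => measurableSet_eq_fun hp_meas measurable_const
  have hae : a = fun r => ((volume.restrict T) {s | p s ≤ r}).toReal := by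
    funext r
    rw [ha, Measure.restrict_apply (hmle r), inter_comm]; rfl
  have haUe : aU = fun r => ((volume.restrict U) {s | p s ≤ r}).toReal := by
    funext r
    rw [haU, Measure.restrict_apply (hmle r), inter_comm]
  have hac : ∀ t ∈ Icc (0:ℝ) 1, ContinuousAt a t := by
    intro t ht
    rw [hae]
    apply aux_cont _ _ hp_meas
    rw [Measure.restrict_apply (hmeq t), inter_comm]
    exact ha1 t ht
  have haUc : ∀ t ∈ Icc (0:ℝ) 1, ContinuousAt aU t := by
    intro t ht
    rw [haUe]
    apply aux_cont _ _ hp_meas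
    rw [Measure.restrict_apply (hmeq t), inter_comm]
    refine measure_mono_null ?_ (ha1 t ht)
    intro x hx
    exact ⟨hU_sub hx.1, hx.2⟩
  have hamono : Monotone a := by
    intro r s hrs
    rw [hae]
    exact ENNReal.toReal_mono (measure_ne_top _ _) (measure_mono fun x hx => le_trans hx hrs)
  have ha_le : ∀ r, a r ≤ 1 := by
    intro r
    rw [ha]
    have : volume {s ∈ T | p s ≤ r} ≤ 1 := hT_norm ▸ measure_mono (fun x hx => hx.1)
    simpa using ENNReal.toReal_mono (by simp) this
  have ha_nn : ∀ r, 0 ≤ a r := fun r => by rw [ha]; exact ENNReal.toReal_nonneg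
  have hak_nn : ∀ k r, 0 ≤ ak k r := fun k r => by rw [hak]; positivity
  have bdd : ∀ f : ℝ → ℝ, BddAbove {r ∈ Icc (0:ℝ) 1 | r / α ≤ f r} :=
    fun f => ⟨1, fun r hr => hr.1.2⟩
  have hne : ∀ f : ℝ → ℝ, 0 ≤ f 0 → (0:ℝ) ∈ {r ∈ Icc (0:ℝ) 1 | r / α ≤ f r} :=
    fun f hf => ⟨by simp, by simpa using hf⟩
  have hs0 : 0 ≤ αStar := hαStar ▸ le_csSup (bdd a) (hne a (ha_nn 0))
  have hsα : αStar ≤ α := by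
    rw [hαStar]
    apply csSup_le ⟨0, hne a (ha_nn 0)⟩
    intro r hr
    have := hr.2.trans (ha_le r)
    rwa [div_le_one hα0] at this
  have hsI : αStar ∈ Icc (0:ℝ) 1 := ⟨hs0, hsα.trans hα1.le⟩
  have hb0 : ∀ k, 0 ≤ b k := fun k => hb k ▸ le_csSup (bdd _) (hne _ (hak_nn k 0))
  have hb1 : ∀ k, b k ≤ 1 := fun k => by
    rw [hb]; exact csSup_le ⟨0, hne _ (hak_nn k 0)⟩ fun r hr => hr.1.2
  rw [Metric.tendstoUniformlyOn_iff] at hG1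
  have hup : ∀ c > αStar, ∀ᶠ k in atTop, b k ≤ c := by
    intro c hc
    by_cases hc1 : 1 ≤ c
    · exact Eventually.of_forall fun k => (hb1 k).trans hc1
    push Not at hc1
    have hc0 : 0 < c := hs0.trans_lt hc
    have hsub : Icc c 1 ⊆ Icc (0:ℝ) 1 := Icc_subset_Icc_left hc0.le
    obtain ⟨x, hx, hmin⟩ := (isCompact_Icc (a := c) (b := 1)).exists_isMinOn
      ⟨c, le_rfl, hc1.le⟩ (f := fun r => r / α - a r)
      (fun t ht => ((continuousAt_id.div_const α).sub (hac t (hsub ht))).continuousWithinAt)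
    have hxpos : 0 < x / α - a x := by
      by_contra hcon
      have : x ≤ αStar := hαStar ▸ le_csSup (bdd a) ⟨hsub hx, by linarith⟩
      linarith [hx.1]
    filter_upwards [hG1 _ hxpos] with k hk
    rw [hb]
    apply csSup_le ⟨0, hne _ (hak_nn k 0)⟩
    intro r hr
    by_contra hcon
    push Not at hcon
    have h1 := hk r hr.1
    have h2 : x / α - a x ≤ r / α - a r := hmin (⟨hcon.le, hr.1.2⟩ : r ∈ Icc c 1)
    rw [Real.dist_eq, abs_lt] at h1
    linarith [hr.2, h1.1]
  have hQkA : ∀ k, Qk k = aUk k (b k) / ak k (b k) := by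
    intro k
    have hSk : ((S k).card : ℝ) ≠ 0 := by
      exact_mod_cast (hS_ne k).card_pos.ne'
    rw [hQk, haUk, hak, div_div_div_cancel_right₀ hSk, ← hA]
    have : (A k).filter (fun t => t ∈ U) = (S k).filter (fun s => s ∈ U ∧ p s ≤ b k) := by
      rw [hA, Finset.filter_filter]
      congr 1; ext s; tauto
    rw [this]
    split_ifs with h
    · rfl
    · rw [Finset.not_nonempty_iff_eq_empty] at h
      simp [h]
  rcases hs0.eq_or_lt with h0 | hpos
  · have hc := ha3 h0.symm
    have hlow : ∀ t ∈ T, sInf (p '' T) ≤ p t := fun t ht =>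
      csInf_le ⟨0, by rintro _ ⟨s, hs, rfl⟩; exact (hp_val s hs).1⟩ ⟨t, ht, rfl⟩
    have hQ0 : Q = 0 := by
      have : {t ∈ T | p t ≤ αStar} = ∅ := by
        ext t
        simp only [mem_setOf_eq, mem_empty_iff_false, iff_false, not_and, not_le]
        intro ht
        linarith [hlow t ht]
      rw [hQ, this]; simp
    rw [hQ0]
    apply tendsto_const_nhds.congr'
    filter_upwards [hup (sInf (p '' T) / 2) (by linarith)] with k hk
    have : A k = ∅ := by
      rw [hA, Finset.filter_eq_empty_iff]
      intro t ht hle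
      linarith [hlow t (hS_sub k ht)]
    rw [hQk, this]; simp
  · have hlo : ∀ c < αStar, ∀ᶠ k in atTop, c < b k := by
      intro c hc
      obtain ⟨s, ⟨hsc, hsI'⟩, -, -, hs, -⟩ := ha2 ⟨hpos, hsα⟩ (Ioi c) isOpen_Ioi hc
      filter_upwards [hG1 (a s - s / α) (by linarith)] with k hk
      have h1 := hk s hsI'
      rw [Real.dist_eq, abs_lt] at h1
      refine lt_of_lt_of_le hsc ?_
      rw [hb]
      exact le_csSup (bdd _) ⟨hsI', by linarith [h1.2]⟩
    have hbt : Tendsto b atTop (nhds αStar) := by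
      rw [tendsto_order]
      refine ⟨hlo, fun c hc => ?_⟩
      filter_upwards [hup ((αStar + c) / 2) (by linarith)] with k hk
      linarith
    have hbt' : Tendsto b atTop (nhdsWithin αStar (Icc 0 1)) :=
      tendsto_nhdsWithin_iff.2 ⟨hbt, Eventually.of_forall fun k => ⟨hb0 k, hb1 k⟩⟩
    have hta : Tendsto (fun k => ak k (b k)) atTop (nhds (a αStar)) :=
      (Metric.tendstoUniformlyOn_iff.2 hG1).tendsto_comp (hac _ hsI).continuousWithinAt hbt'
    have htU : Tendsto (fun k => aUk k (b k)) atTop (nhds (aU αStar)) :=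
      hG2.tendsto_comp (haUc _ hsI).continuousWithinAt hbt'
    have hapos : 0 < a αStar := by
      have : αStar ≤ α * a αStar := by
        conv_lhs => rw [hαStar]
        apply csSup_le ⟨0, hne a (ha_nn 0)⟩
        intro r hr
        have h1 : r ≤ αStar := by rw [hαStar]; exact le_csSup (bdd a) hr
        have h2 := hr.2.trans (hamono h1)
        rw [div_le_iff₀ hα0] at h2
        linarith
      by_contra hcon
      nlinarith
    have hQe : Q = aU αStar / a αStar := by
      rw [hQ, if_pos, ha, haU]
      rw [ha] at hapos
      exact (ENNReal.toReal_pos_iff.1 hapos).1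
    rw [hQe, funext hQkA]
    exact htU.div hta hapos.ne'
end

section
/- Assume (G1w), (G2w) and (a1)–(a3) hold. Then the weighted step-k false discovery proportions converge to the limiting false discovery proportion: Q_k → Q as k → ∞. -/
open Filter Set MeasureTheory
open scoped Classical

lemma aux_core (A : ℕ → ℝ → ℝ) (a : ℝ → ℝ) (α : ℝ) (hα0 : 0 < α)
    (hac : ContinuousOn a (Set.Icc 0 1)) (hA0 : ∀ k r, 0 ≤ A k r)
    (hu : TendstoUniformlyOn A a atTop (Set.Icc 0 1))
    (b : ℕ → ℝ) (hb : ∀ k, b k = sSup {r ∈ Set.Icc (0:ℝ) 1 | r * A k 1 ≤ α * A k r})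
    (c : ℝ) (hc : c = sSup {r ∈ Set.Icc (0:ℝ) 1 | r * a 1 ≤ α * a r})
    (ha0 : ∀ r, 0 ≤ a r)
    (h2 : 0 < c → ∀ ε > 0, ∃ s ∈ Set.Icc (0:ℝ) 1, c - ε < s ∧ s * a 1 < α * a s) :
    Tendsto b atTop (nhds c) ∧ c ∈ Set.Icc (0:ℝ) 1 ∧ c * a 1 ≤ α * a c ∧
      ∀ k, b k ∈ Set.Icc (0:ℝ) 1 := by
  have bdd : ∀ g : ℝ → ℝ, BddAbove {r ∈ Set.Icc (0:ℝ) 1 | r * g 1 ≤ α * g r} :=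
    fun g => ⟨1, fun r hr => hr.1.2⟩
  have mem0 : ∀ g : ℝ → ℝ, (∀ r, 0 ≤ g r) → (0:ℝ) ∈ {r ∈ Set.Icc (0:ℝ) 1 | r * g 1 ≤ α * g r} := by
    intro g hg
    refine ⟨by simp, ?_⟩
    rw [zero_mul]; exact mul_nonneg hα0.le (hg 0)
  have hb01 : ∀ k, b k ∈ Set.Icc (0:ℝ) 1 := by
    intro k
    rw [hb k]
    exact ⟨le_csSup (bdd _) (mem0 _ (hA0 k)), csSup_le ⟨0, mem0 _ (hA0 k)⟩ fun r hr => hr.1.2⟩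
  have hclosed : IsClosed {r ∈ Set.Icc (0:ℝ) 1 | r * a 1 ≤ α * a r} := by
    exact isClosed_Icc.isClosed_le (by fun_prop) (by fun_prop)
  have hcm : c ∈ {r ∈ Set.Icc (0:ℝ) 1 | r * a 1 ≤ α * a r} := by
    rw [hc]; exact hclosed.csSup_mem ⟨0, mem0 _ ha0⟩ (bdd _)
  refine ⟨?_, hcm.1, hcm.2, hb01⟩
  have key : ∀ δ > 0, ∀ᶠ k in atTop, ∀ r ∈ Set.Icc (0:ℝ) 1,
      |(α * A k r - r * A k 1) - (α * a r - r * a 1)| < δ := by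
    intro δ hδ
    have hpos : 0 < δ / (α + 1) := by positivity
    filter_upwards [Metric.tendstoUniformlyOn_iff.1 hu _ hpos] with k hk r hr
    have h1 := hk r hr
    have h3 := hk 1 (by simp)
    rw [dist_comm, Real.dist_eq] at h1 h3
    have e : (α * A k r - r * A k 1) - (α * a r - r * a 1)
      = α * (A k r - a r) - r * (A k 1 - a 1) := by ring
    rw [e]
    calc _ ≤ |α * (A k r - a r)| + |r * (A k 1 - a 1)| := abs_sub _ _
      _ = α * |A k r - a r| + r * |A k 1 - a 1| := by
        rw [abs_mul, abs_mul, abs_of_pos hα0, abs_of_nonneg hr.1]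
      _ ≤ α * |A k r - a r| + 1 * |A k 1 - a 1| := by gcongr; exact hr.2
      _ < α * (δ / (α + 1)) + 1 * (δ / (α + 1)) := by gcongr
      _ = δ := by field_simp
  rw [tendsto_order]
  constructor
  · intro x hx
    rcases hcm.1.1.eq_or_lt with h0 | h0
    · exact Eventually.of_forall fun k => by have := (hb01 k).1; linarith
    obtain ⟨s, hs, hs1, hs2⟩ := h2 h0 (c - x) (by linarith)
    filter_upwards [key (α * a s - s * a 1) (by linarith)] with k hk
    have := (abs_lt.1 (hk s hs)).1
    have : s ≤ b k := by
      rw [hb k]; exact le_csSup (bdd _) ⟨hs, by linarith⟩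
    linarith
  · intro x hx
    obtain ⟨y, hy1, hy2⟩ := exists_between hx
    have hsub : Set.Icc y 1 ⊆ Set.Icc (0:ℝ) 1 := Set.Icc_subset_Icc_left (by linarith [hcm.1.1])
    have hδ : ∃ δ > 0, ∀ r ∈ Set.Icc y 1, δ ≤ r * a 1 - α * a r := by
      rcases (Set.Icc y 1).eq_empty_or_nonempty with he | hne
      · exact ⟨1, one_pos, by simp [he]⟩
      have hac' := hac.mono hsub
      obtain ⟨z, hz, hmin⟩ := isCompact_Icc.exists_isMinOn hne
        (f := fun r => r * a 1 - α * a r) (by fun_prop)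
      refine ⟨_, ?_, fun r hr => hmin hr⟩
      by_contra hcon
      have : z ≤ c := by
        rw [hc]; exact le_csSup (bdd _) ⟨hsub hz, by simp only [gt_iff_lt] at hcon; linarith⟩
      linarith [hz.1]
    obtain ⟨δ, hδ, hr⟩ := hδ
    filter_upwards [key δ hδ] with k hk
    refine lt_of_le_of_lt ?_ hy2
    rw [hb k]
    refine csSup_le ⟨0, mem0 _ (hA0 k)⟩ fun r hr' => ?_
    by_contra hcon
    have h1 := hr r ⟨by linarith, hr'.1.2⟩
    have h3 := (abs_lt.1 (hk r hr'.1)).2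
    linarith [hr'.2]

lemma aux_cont_s9 {X : Type*} [MeasurableSpace X] (ν : Measure X) [IsFiniteMeasure ν]
    (p : X → ℝ) (hp : Measurable p) (T V : Set X) (hV : MeasurableSet V)
    (hT : ν Tᶜ = 0) (h1 : ∀ t ∈ Set.Icc (0:ℝ) 1, ν {s ∈ T | p s = t} = 0) :
    ContinuousOn (fun r => (ν (V ∩ {s | p s ≤ r})).toReal) (Set.Icc 0 1) := by
  intro r hr
  refine ContinuousAt.continuousWithinAt ?_
  refine (ENNReal.tendsto_toReal (measure_ne_top _ _)).comp ?_
  refine tendsto_measure_of_ae_tendsto_indicator_of_isFiniteMeasure (nhds r) ?_ ?_ ?_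
  · exact hV.inter (measurableSet_le hp measurable_const)
  · exact fun r => hV.inter (measurableSet_le hp measurable_const)
  · have h2 : ∀ᵐ x ∂ν, p x ≠ r := by
      rw [ae_iff]
      refine measure_mono_null (t := {s ∈ T | p s = r} ∪ Tᶜ) ?_ (measure_union_null (h1 r hr) hT)
      intro x hx
      by_cases hxT : x ∈ T
      · exact Or.inl ⟨hxT, by simpa using hx⟩
      · exact Or.inr hxT
    filter_upwards [h2] with x hx
    rcases lt_or_gt_of_ne hx with h | h
    · filter_upwards [lt_mem_nhds h] with y hy
      simp [h.le, hy.le]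
    · filter_upwards [gt_mem_nhds h] with y hy
      simp [not_le.2 h, not_le.2 hy]

/-- under the weighted grid approximation assumptions (G1w), (G2w) and the
regularity assumptions (a1)–(a3), the weighted step-`k` false discovery proportions converge to
the limiting false discovery proportion: `Q_k → Q`. -/
theorem fBH_weighted_fdp_tendsto {d : ℕ}
    (T : Set (EuclideanSpace ℝ (Fin d)))
    (hT_open : IsOpen T) (hT_bdd : Bornology.IsBounded T) (hT_ne : T.Nonempty)
    (hT_norm : volume T = 1)
    -- weight function and weighted measure ν = f·μ
    (f : EuclideanSpace ℝ (Fin d) → ℝ) (hf_meas : Measurable f)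
    (hf_pos : ∀ t ∈ T, 0 < f t) (hf_bdd : ∃ C : ℝ, ∀ t ∈ T, f t ≤ C)
    (ν : Measure (EuclideanSpace ℝ (Fin d)))
    (hν : ν = (volume.restrict T).withDensity (fun x => ENNReal.ofReal (f x)))
    -- p-value function and true-null region
    (p : EuclideanSpace ℝ (Fin d) → ℝ) (hp_meas : Measurable p)
    (hp_val : ∀ t ∈ T, p t ∈ Set.Icc (0:ℝ) 1)
    (U : Set (EuclideanSpace ℝ (Fin d))) (hU_sub : U ⊆ T) (hU_meas : MeasurableSet U)
    (α : ℝ) (hα : α ∈ Set.Ioo (0:ℝ) 1)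
    -- cumulated p-value function and adjusted threshold
    (a : ℝ → ℝ) (ha : ∀ r, a r = (ν {s ∈ T | p s ≤ r}).toReal)
    (αStar : ℝ)
    (hαStar : αStar = sSup {r ∈ Set.Icc (0:ℝ) 1 | r / α ≤ a r / (ν T).toReal})
    -- nested grids and weighted empirical quantities
    (S : ℕ → Finset (EuclideanSpace ℝ (Fin d)))
    (hS_ne : ∀ k, (S k).Nonempty) (hS_sub : ∀ k, ↑(S k) ⊆ T)
    (hS_mono : ∀ k, S k ⊆ S (k + 1))
    (ak : ℕ → ℝ → ℝ)
    (hak : ∀ k r, ak k r = (∑ s ∈ (S k).filter (fun s => p s ≤ r), f s) / ∑ s ∈ S k, f s)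
    (b : ℕ → ℝ) (hb : ∀ k, b k = sSup {r ∈ Set.Icc (0:ℝ) 1 | r / α ≤ ak k r})
    -- (G1w)
    (hG1w : TendstoUniformlyOn
      (fun k r => (∑ s ∈ (S k).filter (fun s => p s ≤ r), f s) / (S k).card)
      (fun r => (ν {s ∈ T | p s ≤ r}).toReal) atTop (Set.Icc 0 1))
    -- (G2w)
    (hG2w : TendstoUniformlyOn
      (fun k r => (∑ s ∈ (S k).filter (fun s => s ∈ U ∧ p s ≤ r), f s) / (S k).card)
      (fun r => (ν (U ∩ {s | p s ≤ r})).toReal) atTop (Set.Icc 0 1))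
    -- (a1)
    (ha1 : ∀ t ∈ Set.Icc (0:ℝ) 1, ν {s ∈ T | p s = t} = 0)
    -- (a2)
    (ha2 : αStar ∈ Set.Ioc 0 α → ∀ O : Set ℝ, IsOpen O → αStar ∈ O →
      ∃ s₁ ∈ O ∩ Set.Icc (0:ℝ) 1, ∃ s₂ ∈ O ∩ Set.Icc (0:ℝ) 1,
        s₁ / α < a s₁ / (ν T).toReal ∧ a s₂ / (ν T).toReal < s₂ / α)
    -- (a3)
    (ha3 : αStar = 0 → 0 < sInf (p '' T))
    -- weighted step-k false discovery proportions
    (Qk : ℕ → ℝ)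
    (hQk : ∀ k, Qk k = if 0 < ∑ t ∈ (S k).filter (fun t => p t ≤ b k), f t
      then (∑ t ∈ (S k).filter (fun t => t ∈ U ∧ p t ≤ b k), f t) /
        ∑ t ∈ (S k).filter (fun t => p t ≤ b k), f t
      else 0)
    -- limiting false discovery proportion
    (Q : ℝ)
    (hQ : Q = if 0 < ν {t ∈ T | p t ≤ αStar}
      then (ν (U ∩ {t | p t ≤ αStar})).toReal / (ν {t ∈ T | p t ≤ αStar}).toReal
      else 0) :
    Tendsto Qk atTop (nhds Q) := by
  obtain ⟨hα0, hα1⟩ := hα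
  have hTm : MeasurableSet T := hT_open.measurableSet
  have hTc : ν Tᶜ = 0 := by
    rw [hν]
    exact withDensity_absolutelyContinuous _ _ (by simp [Measure.restrict_apply hTm.compl])
  obtain ⟨C, hC⟩ := hf_bdd
  have hfin : IsFiniteMeasure ν := by
    rw [hν]
    refine isFiniteMeasure_withDensity (ne_of_lt ?_)
    calc ∫⁻ x in T, ENNReal.ofReal (f x) ≤ ∫⁻ x in T, ENNReal.ofReal C :=
          setLIntegral_mono measurable_const fun x hx => ENNReal.ofReal_le_ofReal (hC x hx)
      _ < ⊤ := by simp [hT_norm]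
  have hνT : ν T ≠ 0 := by
    intro h0
    rw [hν, withDensity_apply _ hTm, Measure.restrict_restrict hTm, Set.inter_self,
      lintegral_eq_zero_iff (by fun_prop)] at h0
    have h3 : ∀ᵐ x ∂(volume.restrict T), False := by
      filter_upwards [h0, ae_restrict_mem hTm] with x hx hxT
      have := hf_pos x hxT
      simp only [Pi.zero_apply, ENNReal.ofReal_eq_zero] at hx
      linarith
    rw [eventually_false_iff_eq_bot, ae_eq_bot, Measure.restrict_eq_zero, hT_norm] at h3
    exact one_ne_zero h3
  have hN : 0 < (ν T).toReal := ENNReal.toReal_pos hνT (measure_ne_top _ _)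
  have hset1 : {s ∈ T | p s ≤ 1} = T := by
    ext s; exact ⟨fun h => h.1, fun h => ⟨h, (hp_val s h).2⟩⟩
  have ha1' : a 1 = (ν T).toReal := by rw [ha, hset1]
  have hSc : ∀ k, (0:ℝ) < (S k).card := fun k => by exact_mod_cast (hS_ne k).card_pos
  have hf0 : ∀ k, ∀ s ∈ S k, 0 < f s := fun k s hs => hf_pos s (hS_sub k hs)
  have hfil1 : ∀ k, (S k).filter (fun s => p s ≤ 1) = S k := by
    intro k
    rw [Finset.filter_eq_self]
    exact fun s hs => (hp_val s (hS_sub k hs)).2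
  have hsum : ∀ k, 0 < ∑ s ∈ S k, f s := fun k => Finset.sum_pos (hf0 k) (hS_ne k)
  have hacont : ContinuousOn a (Set.Icc 0 1) := by
    have := aux_cont_s9 ν p hp_meas T T hTm hTc ha1
    refine this.congr fun r _ => ?_
    rw [ha]; rfl
  have hUcont := aux_cont_s9 ν p hp_meas T U hU_meas hTc ha1
  have hG1 : TendstoUniformlyOn
      (fun k r => (∑ s ∈ (S k).filter (fun s => p s ≤ r), f s) / (S k).card)
      a atTop (Set.Icc 0 1) := hG1w.congr_right fun r _ => (ha r).symm
  have ha0 : ∀ r, 0 ≤ a r := fun r => by rw [ha]; exact ENNReal.toReal_nonneg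
  have hc : αStar = sSup {r ∈ Set.Icc (0:ℝ) 1 | r * a 1 ≤ α * a r} := by
    rw [hαStar]; congr 1; ext r
    simp only [Set.mem_setOf_eq]
    rw [div_le_div_iff₀ hα0 hN, ha1', mul_comm (a r)]
  have hle : αStar ≤ α := by
    rw [hαStar]
    refine csSup_le ⟨0, by simp, ?_⟩ fun r hr => ?_
    · rw [zero_div]; exact div_nonneg (ha0 0) hN.le
    · have h1 : a r ≤ (ν T).toReal := by
        rw [ha]
        exact ENNReal.toReal_mono (measure_ne_top _ _) (measure_mono fun s hs => hs.1)
      have h2 : r / α ≤ 1 := hr.2.trans ((div_le_one hN).2 h1)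
      exact (div_le_one hα0).1 h2
  obtain ⟨hbt, hc01, hcle, hb01⟩ := aux_core
    (fun k r => (∑ s ∈ (S k).filter (fun s => p s ≤ r), f s) / (S k).card)
    a α hα0 hacont
    (fun k r => div_nonneg (Finset.sum_nonneg fun s hs =>
      (hf0 k s (Finset.mem_filter.1 hs).1).le) (hSc k).le)
    hG1 b
    (by
      intro k
      rw [hb k]; congr 1; ext r
      simp only [Set.mem_setOf_eq]
      rw [hak, hfil1, div_le_div_iff₀ hα0 (hsum k), ← mul_div_assoc, ← mul_div_assoc,
        div_le_div_iff_of_pos_right (hSc k), mul_comm α])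
    αStar hc ha0
    (by
      intro hpos ε hε
      obtain ⟨s, hs, _, _, hs2, _⟩ := ha2 ⟨hpos, hle⟩ (Set.Ioi (αStar - ε)) isOpen_Ioi
        (by simp [hε])
      refine ⟨s, hs.2, hs.1, ?_⟩
      rw [div_lt_div_iff₀ hα0 hN] at hs2
      rw [ha1']; linarith)
  have hbt' : Tendsto b atTop (nhdsWithin αStar (Set.Icc 0 1)) :=
    tendsto_nhdsWithin_iff.2 ⟨hbt, Eventually.of_forall hb01⟩
  have hD := hG1.tendsto_comp (hacont _ hc01) hbt'
  have hNum := hG2w.tendsto_comp (hUcont _ hc01) hbt'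
  rcases hc01.1.eq_or_lt with h0 | h0
  · have hm := ha3 h0.symm
    have hpm : ∀ t ∈ T, sInf (p '' T) ≤ p t := fun t ht =>
      csInf_le ⟨0, by rintro _ ⟨t, ht, rfl⟩; exact (hp_val t ht).1⟩ ⟨t, ht, rfl⟩
    have hQ0 : Q = 0 := by
      rw [hQ, if_neg]
      have : {t ∈ T | p t ≤ αStar} = ∅ := by
        ext t
        simp only [Set.mem_setOf_eq, Set.mem_empty_iff_false, iff_false, not_and, not_le]
        intro ht
        linarith [hpm t ht]
      simp [this]
    rw [hQ0]
    refine tendsto_const_nhds.congr' ?_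
    filter_upwards [hbt.eventually_lt_const (h0 ▸ hm)] with k hk
    rw [hQk, if_neg]
    have : (S k).filter (fun t => p t ≤ b k) = ∅ := by
      rw [Finset.filter_eq_empty_iff]
      intro t ht
      have := hpm t (hS_sub k ht)
      linarith
    simp [this]
  · have hapos : 0 < a αStar := by
      rw [← ha1'] at hN
      have := mul_pos h0 hN
      exact pos_of_mul_pos_right (this.trans_le hcle) hα0.le
    have hQ1 : Q = (ν (U ∩ {t | p t ≤ αStar})).toReal / a αStar := by
      rw [hQ, if_pos, ha]
      rw [ha] at hapos
      exact (ENNReal.toReal_pos_iff.1 hapos).1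
    rw [hQ1]
    refine (hNum.div hD hapos.ne').congr' ?_
    filter_upwards [hD.eventually_const_lt hapos] with k hk
    have hk' := (div_pos_iff_of_pos_right (hSc k)).1 hk
    rw [hQk, if_pos hk']
    simp only [Pi.div_apply]
    exact div_div_div_cancel_right₀ (hSc k).ne' _ _
end

section
/- Suppose that almost surely the realized p-value function p_ω satisfies (G1w), (G2w) and (a1)–(a3); that the process (p(·,t))_{t∈T} is PRDS on U; and that P(p(·,t) ≤ x) ≤ x for every t ∈ U and x ∈ [0,1]. Then the weighted step-k false discovery proportions converge almost surely to the limiting false discovery proportion, Q_k → Q, and limsup_{k→∞} E[Q_k] ≤ α·ν(U)/ν(T) ≤ α. -/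
open Filter Set MeasureTheory
open scoped Classical

namespace FBH

/-- weighted empirical cdf -/
noncomputable def W {E : Type*} (S : Finset E) (f : E → ℝ) (x : E → ℝ) (r : ℝ) : ℝ :=
  (∑ s ∈ S.filter (fun s => x s ≤ r), f s) / ∑ s ∈ S, f s

/-- weighted BH threshold -/
noncomputable def bh {E : Type*} (S : Finset E) (f : E → ℝ) (α : ℝ) (x : E → ℝ) : ℝ :=
  sSup {r ∈ Set.Icc (0:ℝ) 1 | r / α ≤ W S f x r}

noncomputable def Vals {E : Type*} (S : Finset E) (f : E → ℝ) (α : ℝ) : Finset ℝ :=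
  S.powerset.image (fun A => α * ((∑ s ∈ A, f s) / ∑ s ∈ S, f s))

section
variable {E : Type*} (S : Finset E) (f : E → ℝ) (α : ℝ)

lemma W_mono (hf : ∀ s ∈ S, 0 < f s) {x y : E → ℝ} (hxy : ∀ s ∈ S, x s ≤ y s) {r r' : ℝ}
    (hr : r ≤ r') : W S f y r ≤ W S f x r' := by
  unfold W
  have h0 : 0 ≤ ∑ s ∈ S, f s := Finset.sum_nonneg fun s hs => (hf s hs).le
  refine div_le_div_of_nonneg_right ?_ h0
  refine Finset.sum_le_sum_of_subset_of_nonneg ?_ ?_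
  · intro s hs
    simp only [Finset.mem_filter] at hs ⊢
    exact ⟨hs.1, (hxy s hs.1).trans (hs.2.trans hr)⟩
  · intro s hs _
    exact (hf s (Finset.mem_filter.1 hs).1).le

lemma frac_mem (hf : ∀ s ∈ S, 0 < f s) {A : Finset E} (hA : A ⊆ S) :
    (∑ s ∈ A, f s) / ∑ s ∈ S, f s ∈ Set.Icc (0:ℝ) 1 := by
  have h0 : 0 ≤ ∑ s ∈ S, f s := Finset.sum_nonneg fun s hs => (hf s hs).le
  refine ⟨div_nonneg (Finset.sum_nonneg fun s hs => (hf s (hA hs)).le) h0, ?_⟩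
  exact div_le_one_of_le₀ (Finset.sum_le_sum_of_subset_of_nonneg hA
    fun s hs _ => (hf s hs).le) h0

lemma Vals_mem (hf : ∀ s ∈ S, 0 < f s) (hα : α ∈ Set.Ioo (0:ℝ) 1) {v : ℝ}
    (hv : v ∈ Vals S f α) : v ∈ Set.Icc (0:ℝ) 1 := by
  unfold Vals at hv
  obtain ⟨A, hA, rfl⟩ := Finset.mem_image.1 hv
  have := frac_mem S f hf (Finset.mem_powerset.1 hA)
  exact ⟨mul_nonneg hα.1.le this.1, mul_le_one₀ hα.2.le this.1 this.2⟩

lemma W_mem (hf : ∀ s ∈ S, 0 < f s) (x : E → ℝ) (r : ℝ) : W S f x r ∈ Set.Icc (0:ℝ) 1 :=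
  frac_mem S f hf (Finset.filter_subset _ _)

lemma le_bh {x : E → ℝ} {r : ℝ} (hr : r ∈ Set.Icc (0:ℝ) 1) (h : r / α ≤ W S f x r) :
    r ≤ bh S f α x :=
  le_csSup ⟨1, fun _ h => h.1.2⟩ ⟨hr, h⟩

lemma bh_eq (hf : ∀ s ∈ S, 0 < f s) (hα : α ∈ Set.Ioo (0:ℝ) 1) (x : E → ℝ) :
    bh S f α x = α * W S f x (bh S f α x) := by
  have hα0 := hα.1
  have h1 : bh S f α x ≤ α * W S f x (bh S f α x) := by
    conv_lhs => unfold bh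
    refine csSup_le ⟨0, ⟨le_rfl, zero_le_one⟩, ?_⟩ ?_
    · simpa using (W_mem S f hf x 0).1
    · intro r hr
      have := W_mono S f hf (fun s _ => le_refl (x s)) (le_bh S f α hr.1 hr.2)
      have h2 := hr.2.trans this
      rwa [div_le_iff₀ hα0, mul_comm] at h2
  refine le_antisymm h1 (le_bh S f α ?_ ?_)
  · have := W_mem S f hf x (bh S f α x)
    exact ⟨mul_nonneg hα.1.le this.1, mul_le_one₀ hα.2.le this.1 this.2⟩
  · rw [mul_div_cancel_left₀ _ hα0.ne']
    exact W_mono S f hf (fun s _ => le_refl (x s)) h1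

lemma bh_mem_Vals (hf : ∀ s ∈ S, 0 < f s) (hα : α ∈ Set.Ioo (0:ℝ) 1) (x : E → ℝ) :
    bh S f α x ∈ Vals S f α := by
  rw [bh_eq S f α hf hα x]
  unfold Vals
  exact Finset.mem_image.2 ⟨_, Finset.mem_powerset.2 (Finset.filter_subset _ _), rfl⟩

lemma bh_le_iff (hf : ∀ s ∈ S, 0 < f s) (hα : α ∈ Set.Ioo (0:ℝ) 1) (x : E → ℝ) (c : ℝ) :
    bh S f α x ≤ c ↔ ∀ w ∈ Vals S f α, c < w → W S f x w < w / α := by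
  constructor
  · intro h w hw hc
    by_contra! h2
    exact absurd (le_bh S f α (Vals_mem S f α hf hα hw) h2) (by linarith)
  · intro h
    by_contra! h2
    have h3 := h _ (bh_mem_Vals S f α hf hα x) h2
    rw [lt_div_iff₀ hα.1, mul_comm, ← bh_eq S f α hf hα x] at h3
    exact lt_irrefl _ h3

lemma bh_anti (hf : ∀ s ∈ S, 0 < f s) (hα : α ∈ Set.Ioo (0:ℝ) 1) {x y : E → ℝ}
    (hxy : ∀ s ∈ S, x s ≤ y s) : bh S f α y ≤ bh S f α x := by
  refine le_bh S f α (Vals_mem S f α hf hα (bh_mem_Vals S f α hf hα y)) ?_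
  have : bh S f α y / α = W S f y (bh S f α y) := by
    rw [div_eq_iff hα.1.ne', mul_comm]; exact bh_eq S f α hf hα y
  rw [this]
  exact W_mono S f hf hxy le_rfl

lemma bh_congr (hf : ∀ s ∈ S, 0 < f s) (hα : α ∈ Set.Ioo (0:ℝ) 1) {x y : E → ℝ}
    (hxy : ∀ s ∈ S, x s = y s) : bh S f α x = bh S f α y :=
  le_antisymm (bh_anti S f α hf hα fun s hs => (hxy s hs).ge)
    (bh_anti S f α hf hα fun s hs => (hxy s hs).le)

lemma W_meas {Ω : Type*} [MeasurableSpace Ω] (p : Ω → E → ℝ)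
    (hp : ∀ s ∈ S, Measurable fun ω => p ω s) (r : ℝ) :
    Measurable fun ω => W S f (p ω) r := by
  unfold W
  refine Measurable.div_const ?_ _
  simp_rw [Finset.sum_filter]
  refine Finset.measurable_fun_sum _ fun s hs => ?_
  exact Measurable.ite (measurableSet_le (hp s hs) measurable_const) measurable_const
    measurable_const

lemma bh_meas (hf : ∀ s ∈ S, 0 < f s) (hα : α ∈ Set.Ioo (0:ℝ) 1)
    {Ω : Type*} [MeasurableSpace Ω] (p : Ω → E → ℝ)
    (hp : ∀ s ∈ S, Measurable fun ω => p ω s) :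
    Measurable fun ω => bh S f α (p ω) := by
  refine measurable_of_Iic fun c => ?_
  have : (fun ω => bh S f α (p ω)) ⁻¹' Set.Iic c =
      ⋂ w ∈ Vals S f α, {ω | c < w → W S f (p ω) w < w / α} := by
    ext ω
    simp [bh_le_iff S f α hf hα]
  rw [this]
  refine Finset.measurableSet_biInter _ fun w _ => ?_
  by_cases h : c < w
  · simp only [h, true_imp_iff]
    exact measurableSet_lt (W_meas S f p hp w) measurable_const
  · simp [h]

end

section
variable {Ω : Type*} [MeasurableSpace Ω] (P : Measure Ω) [IsProbabilityMeasure P]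

lemma prds_mono {X : Ω → ℝ} (hX : Measurable X) (hX01 : ∀ ω, X ω ∈ Set.Icc (0:ℝ) 1)
    {D : Set Ω} (hD : MeasurableSet D) {g : ℝ → ℝ} (hg : MonotoneOn g (Set.Icc 0 1))
    (hgX : (fun ω => g (X ω)) =ᵐ[P] P[D.indicator (fun _ => (1:ℝ)) |
      MeasurableSpace.comap X (inferInstance : MeasurableSpace ℝ)])
    {u v : ℝ} (hv : v ∈ Set.Icc (0:ℝ) 1) (hvu : v ≤ u) :
    P.real ({ω | X ω ≤ v} ∩ D) * P.real {ω | X ω ≤ u} ≤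
      P.real ({ω | X ω ≤ u} ∩ D) * P.real {ω | X ω ≤ v} := by
  have hm : MeasurableSpace.comap X (inferInstance : MeasurableSpace ℝ) ≤
    (inferInstance : MeasurableSpace Ω) := hX.comap_le
  have hgi : Integrable (fun ω => g (X ω)) P := integrable_condExp.congr hgX.symm
  have key : ∀ c, P.real ({ω | X ω ≤ c} ∩ D) = ∫ ω in {ω | X ω ≤ c}, g (X ω) ∂P := by
    intro c
    have hc : MeasurableSet[MeasurableSpace.comap X inferInstance] {ω | X ω ≤ c} :=
      ⟨Set.Iic c, measurableSet_Iic, rfl⟩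
    rw [setIntegral_congr_ae₀ (g := P[D.indicator (fun _ => (1:ℝ)) |
      MeasurableSpace.comap X (inferInstance : MeasurableSpace ℝ)]) (hm _ hc).nullMeasurableSet
      (hgX.mono fun ω h _ => h),
      setIntegral_condExp hm ((integrable_const (1:ℝ)).indicator hD) hc]
    rw [setIntegral_indicator hD]
    simp
  have hAm : MeasurableSet {ω | X ω ≤ v} := measurableSet_le hX measurable_const
  have hBm : MeasurableSet {ω | v < X ω ∧ X ω ≤ u} :=
    (measurableSet_lt measurable_const hX).inter (measurableSet_le hX measurable_const)
  have hun : {ω | X ω ≤ u} = {ω | X ω ≤ v} ∪ {ω | v < X ω ∧ X ω ≤ u} := by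
    ext ω
    simp only [Set.mem_ofPred_eq, Set.mem_union]
    constructor
    · intro h
      rcases le_or_gt (X ω) v with h1 | h1
      · exact Or.inl h1
      · exact Or.inr ⟨h1, h⟩
    · rintro (h | h)
      · exact h.trans hvu
      · exact h.2
  have hdis : Disjoint {ω | X ω ≤ v} {ω | v < X ω ∧ X ω ≤ u} := by
    rw [Set.disjoint_left]
    intro ω h1 h2
    exact absurd h2.1 (not_lt.2 h1)
  rw [key, key, hun, setIntegral_union hdis hBm hgi.integrableOn hgi.integrableOn,
    measureReal_union hdis hBm]
  have h1 : ∫ ω in {ω | X ω ≤ v}, g (X ω) ∂P ≤ g v * P.real {ω | X ω ≤ v} := by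
    have := setIntegral_mono_on (hgi.integrableOn (s := {ω | X ω ≤ v}))
      (integrable_const (g v)).integrableOn hAm (fun ω hω => hg (hX01 ω) hv hω)
    simpa [mul_comm] using this
  have h2 : g v * P.real {ω | v < X ω ∧ X ω ≤ u} ≤
      ∫ ω in {ω | v < X ω ∧ X ω ≤ u}, g (X ω) ∂P := by
    have := setIntegral_mono_on (integrable_const (g v)).integrableOn
      (hgi.integrableOn (s := {ω | v < X ω ∧ X ω ≤ u}))
      hBm (fun ω hω => hg hv (hX01 ω) hω.1.le)
    simpa [mul_comm] using this
  have n1 : 0 ≤ P.real {ω | X ω ≤ v} := measureReal_nonneg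
  have n2 : 0 ≤ P.real {ω | v < X ω ∧ X ω ≤ u} := measureReal_nonneg
  nlinarith [mul_le_mul_of_nonneg_right h1 n2, mul_le_mul_of_nonneg_right h2 n1]

lemma key_sum {X V : Ω → ℝ} (hX : Measurable X) (hV : Measurable V)
    (hsup : ∀ x ∈ Set.Icc (0:ℝ) 1, P.real {ω | X ω ≤ x} ≤ x)
    (hmono : ∀ c u v : ℝ, u ∈ Set.Icc (0:ℝ) 1 → v ∈ Set.Icc (0:ℝ) 1 → v ≤ u →
      P.real ({ω | X ω ≤ v} ∩ {ω | V ω ≤ c}) * P.real {ω | X ω ≤ u} ≤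
      P.real ({ω | X ω ≤ u} ∩ {ω | V ω ≤ c}) * P.real {ω | X ω ≤ v})
    (s : Finset ℝ) (hs : ∀ v ∈ s, v ∈ Set.Ioc (0:ℝ) 1) :
    ∀ u ∈ Set.Icc (0:ℝ) 1, (∀ v ∈ s, v ≤ u) →
      (∑ v ∈ s, P.real ({ω | X ω ≤ v} ∩ {ω | V ω = v}) / v) * P.real {ω | X ω ≤ u} ≤
        P.real ({ω | X ω ≤ u} ∩ {ω | ∃ v ∈ s, V ω ≤ v}) := by
  induction s using Finset.induction_on_max with
  | empty => intro u _ _; simp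
  | insert v s hlt ih =>
    intro u hu hsu
    have hvs : v ∉ s := fun h => lt_irrefl _ (hlt v h)
    have hv := hs v (Finset.mem_insert_self _ _)
    have hv' : v ∈ Set.Icc (0:ℝ) 1 := ⟨hv.1.le, hv.2⟩
    have ih1 := ih (fun w hw => hs w (Finset.mem_insert_of_mem hw)) v hv' (fun w hw => (hlt w hw).le)
    have hvu := hsu v (Finset.mem_insert_self _ _)
    have hE : {ω | ∃ w ∈ insert v s, V ω ≤ w} = {ω | V ω ≤ v} := by
      ext ω
      simp only [Set.mem_ofPred_eq, Finset.mem_insert, exists_eq_or_imp]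
      constructor
      · rintro (h | ⟨w, hw, h⟩)
        · exact h
        · exact h.trans (hlt w hw).le
      · exact Or.inl
    rw [hE]
    have hle : P.real ({ω | X ω ≤ v} ∩ {ω | ∃ w ∈ s, V ω ≤ w}) +
        P.real ({ω | X ω ≤ v} ∩ {ω | V ω = v}) ≤ P.real ({ω | X ω ≤ v} ∩ {ω | V ω ≤ v}) := by
      rw [← measureReal_union]
      · refine measureReal_mono ?_
        rintro ω (⟨h1, w, hw, h2⟩ | ⟨h1, h2⟩)
        · exact ⟨h1, le_trans h2 (hlt w hw).le⟩
        · exact ⟨h1, le_of_eq h2⟩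
      · rw [Set.disjoint_left]
        rintro ω ⟨_, w, hw, h2⟩ ⟨_, h3⟩
        have h3' : V ω = v := h3
        linarith [hlt w hw]
      · exact (measurableSet_le hX measurable_const).inter
          (measurableSet_eq_fun hV measurable_const)
    have hG := hsup v hv'
    set G := P.real {ω | X ω ≤ v} with hGdef
    have hG0 : 0 ≤ G := measureReal_nonneg
    set Sg := ∑ w ∈ insert v s, P.real ({ω | X ω ≤ w} ∩ {ω | V ω = w}) / w with hSg
    have hstep : Sg * G ≤ P.real ({ω | X ω ≤ v} ∩ {ω | V ω ≤ v}) := by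
      rw [hSg, Finset.sum_insert hvs, add_mul]
      have : P.real ({ω | X ω ≤ v} ∩ {ω | V ω = v}) / v * G ≤
          P.real ({ω | X ω ≤ v} ∩ {ω | V ω = v}) := by
        rw [div_mul_eq_mul_div, div_le_iff₀ hv.1]
        exact mul_le_mul_of_nonneg_left hG measureReal_nonneg
      linarith
    rcases hG0.eq_or_lt with h0 | h0
    · have : Sg = 0 := by
        refine Finset.sum_eq_zero fun w hw => ?_
        have hwv : w ≤ v := by
          rcases Finset.mem_insert.1 hw with rfl | h
          · exact le_rfl
          · exact (hlt w h).le
        have : P.real ({ω | X ω ≤ w} ∩ {ω | V ω = w}) ≤ G :=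
          measureReal_mono fun ω h => le_trans h.1 hwv
        have h2 : P.real ({ω | X ω ≤ w} ∩ {ω | V ω = w}) = 0 :=
          le_antisymm (this.trans h0.symm.le) measureReal_nonneg
        rw [h2, zero_div]
      rw [this, zero_mul]
      exact measureReal_nonneg
    · have hm := hmono v u v hu hv' hvu
      have h1 := mul_le_mul_of_nonneg_right hstep (measureReal_nonneg (μ := P) (s := {ω | X ω ≤ u}))
      have : (Sg * P.real {ω | X ω ≤ u}) * G ≤ P.real ({ω | X ω ≤ u} ∩ {ω | V ω ≤ v}) * G := by
        calc _ = Sg * G * P.real {ω | X ω ≤ u} := by ring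
          _ ≤ _ := h1
          _ ≤ _ := hm
      exact le_of_mul_le_mul_right this h0

lemma key_sum_one {X V : Ω → ℝ} (hX : Measurable X) (hV : Measurable V)
    (hX01 : ∀ ω, X ω ∈ Set.Icc (0:ℝ) 1)
    (hsup : ∀ x ∈ Set.Icc (0:ℝ) 1, P.real {ω | X ω ≤ x} ≤ x)
    (hmono : ∀ c u v : ℝ, u ∈ Set.Icc (0:ℝ) 1 → v ∈ Set.Icc (0:ℝ) 1 → v ≤ u →
      P.real ({ω | X ω ≤ v} ∩ {ω | V ω ≤ c}) * P.real {ω | X ω ≤ u} ≤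
      P.real ({ω | X ω ≤ u} ∩ {ω | V ω ≤ c}) * P.real {ω | X ω ≤ v})
    (s : Finset ℝ) (hs : ∀ v ∈ s, v ∈ Set.Ioc (0:ℝ) 1) :
    ∑ v ∈ s, P.real ({ω | X ω ≤ v} ∩ {ω | V ω = v}) / v ≤ 1 := by
  have h := key_sum P hX hV hsup hmono s hs 1 ⟨zero_le_one, le_rfl⟩ (fun v hv => (hs v hv).2)
  have : {ω | X ω ≤ 1} = Set.univ := by ext ω; simpa using (hX01 ω).2
  rw [this, probReal_univ, mul_one] at h
  exact h.trans measureReal_le_one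

/-- weighted BH controls the FDR -/
lemma fdr_le {E : Type*} (S : Finset E) (hS : S.Nonempty) (f : E → ℝ) (α : ℝ)
    (hf : ∀ s ∈ S, 0 < f s) (hα : α ∈ Set.Ioo (0:ℝ) 1) (U : Set E) (p : Ω → E → ℝ)
    (hp : ∀ s ∈ S, Measurable fun ω => p ω s) (hp01 : ∀ ω, ∀ s ∈ S, p ω s ∈ Set.Icc (0:ℝ) 1)
    (hsup : ∀ t ∈ S, t ∈ U → ∀ x ∈ Set.Icc (0:ℝ) 1, P.real {ω | p ω t ≤ x} ≤ x)
    (hPRDS : ∀ (l : ℕ) (t : Fin l → E), (∀ j, t j ∈ S) →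
      ∀ j : Fin l, t j ∈ U →
      ∀ D : Set (Fin l → ℝ), MeasurableSet D →
      (∀ x y : Fin l → ℝ, x ∈ D → x ≤ y → y ∈ D) →
      ∃ g : ℝ → ℝ, MonotoneOn g (Set.Icc 0 1) ∧
        (fun ω => g (p ω (t j))) =ᵐ[P]
          P[(fun ω => D.indicator (fun _ => (1:ℝ)) (fun i => p ω (t i))) |
            MeasurableSpace.comap (fun ω => p ω (t j)) (inferInstance : MeasurableSpace ℝ)])
    (Q : Ω → ℝ)
    (hQ : ∀ ω, Q ω = if 0 < ∑ t ∈ S.filter (fun t => p ω t ≤ bh S f α (p ω)), f t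
      then (∑ t ∈ S.filter (fun t => t ∈ U ∧ p ω t ≤ bh S f α (p ω)), f t) /
        ∑ t ∈ S.filter (fun t => p ω t ≤ bh S f α (p ω)), f t
      else 0) :
    ∫ ω, Q ω ∂P ≤ α * ((∑ t ∈ S.filter (fun t => t ∈ U), f t) / ∑ t ∈ S, f t) := by
  have hm : 0 < ∑ t ∈ S, f t := Finset.sum_pos hf hS
  have hbm := bh_meas S f α hf hα p hp
  set R := (Vals S f α).filter (fun v => 0 < v) with hR
  have hR01 : ∀ v ∈ R, v ∈ Set.Ioc (0:ℝ) 1 := by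
    intro v hv
    have hv := Finset.mem_filter.1 hv
    exact ⟨hv.2, (Vals_mem S f α hf hα hv.1).2⟩
  have hmono : ∀ t ∈ S, t ∈ U → ∀ c u v : ℝ, u ∈ Set.Icc (0:ℝ) 1 → v ∈ Set.Icc (0:ℝ) 1 → v ≤ u →
      P.real ({ω | p ω t ≤ v} ∩ {ω | bh S f α (p ω) ≤ c}) * P.real {ω | p ω t ≤ u} ≤
      P.real ({ω | p ω t ≤ u} ∩ {ω | bh S f α (p ω) ≤ c}) * P.real {ω | p ω t ≤ v} := by
    intro t ht htU c u v hu hv hvu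
    let e := S.equivFin
    let ext : (Fin S.card → ℝ) → E → ℝ := fun x s => if h : s ∈ S then x (e ⟨s, h⟩) else 0
    have hext : ∀ s ∈ S, Measurable fun x => ext x s := by
      intro s hs
      simp only [ext, hs, dif_pos]
      exact measurable_pi_apply _
    obtain ⟨g, hg, hgX⟩ := hPRDS S.card (fun i => (e.symm i : E)) (fun j => (e.symm j).2)
      (e ⟨t, ht⟩) (by simpa using htU) {x | bh S f α (ext x) ≤ c}
      (measurableSet_le (bh_meas S f α hf hα ext hext) measurable_const)
      (by
        intro x y hx hxy
        refine le_trans (bh_anti S f α hf hα ?_) hx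
        intro s hs
        simp only [ext, hs, dif_pos]
        exact hxy _)
    simp only [Equiv.symm_apply_apply] at hgX
    refine prds_mono P (hp t ht) (fun ω => hp01 ω t ht)
      (measurableSet_le hbm measurable_const) hg (hgX.trans (Eq.eventuallyEq ?_)) hv hvu
    congr 1
    ext ω
    have : bh S f α (ext fun i => p ω (e.symm i)) = bh S f α (p ω) := by
      refine bh_congr S f α hf hα fun s hs => ?_
      simp [ext, hs]
    simp [Set.indicator, this]
  have hQ2 : ∀ ω, Q ω = ∑ t ∈ S.filter (fun t => t ∈ U), (α * (f t / ∑ t ∈ S, f t)) *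
      ∑ v ∈ R, ({ω | p ω t ≤ v} ∩ {ω | bh S f α (p ω) = v}).indicator (fun _ => (1:ℝ)) ω / v := by
    intro ω
    have hb := bh_eq S f α hf hα (p ω)
    have hbv := bh_mem_Vals S f α hf hα (p ω)
    rw [hQ]
    set β := bh S f α (p ω) with hβ
    unfold W at hb
    by_cases h : 0 < ∑ t ∈ S.filter (fun t => p ω t ≤ β), f t
    · have hβ0 : 0 < β := by rw [hb]; exact mul_pos hα.1 (div_pos h hm)
      have hβR : β ∈ R := Finset.mem_filter.2 ⟨hbv, hβ0⟩
      rw [if_pos h, ← Finset.filter_filter, Finset.sum_filter, Finset.sum_div]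
      refine Finset.sum_congr rfl fun t _ => ?_
      rw [Finset.sum_eq_single β]
      · by_cases h2 : p ω t ≤ β
        · have h3 : ω ∈ ({ω | p ω t ≤ β} ∩ {ω | bh S f α (p ω) = β}) := ⟨h2, rfl⟩
          rw [if_pos h2, Set.indicator_of_mem h3]
          have h4 : ∑ t ∈ S.filter (fun t => p ω t ≤ β), f t = β * (∑ t ∈ S, f t) / α := by
            rw [eq_div_iff hα.1.ne']
            field_simp at hb
            linarith
          rw [h4]
          have := hα.1.ne'
          field_simp
        · have h3 : ω ∉ ({ω | p ω t ≤ β} ∩ {ω | bh S f α (p ω) = β}) := fun h => h2 h.1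
          rw [if_neg h2, Set.indicator_of_notMem h3]
          simp
      · intro v _ hv
        have h3 : ω ∉ ({ω | p ω t ≤ v} ∩ {ω | bh S f α (p ω) = v}) := fun h => hv h.2.symm
        rw [Set.indicator_of_notMem h3, zero_div]
      · intro h; exact absurd hβR h
    · rw [if_neg h]
      symm
      refine Finset.sum_eq_zero fun t _ => ?_
      have : β ≤ 0 := by
        rw [hb]
        exact mul_nonpos_of_nonneg_of_nonpos hα.1.le
          (div_nonpos_of_nonpos_of_nonneg (not_lt.1 h) hm.le)
      refine mul_eq_zero_of_right _ (Finset.sum_eq_zero ?_)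
      intro v hv
      have h3 : ω ∉ ({ω | p ω t ≤ v} ∩ {ω | bh S f α (p ω) = v}) := by
        rintro ⟨_, h5⟩
        have h5' : β = v := h5
        linarith [(hR01 v hv).1]
      rw [Set.indicator_of_notMem h3, zero_div]
  have hms : ∀ t ∈ S, ∀ v, MeasurableSet ({ω | p ω t ≤ v} ∩ {ω | bh S f α (p ω) = v}) :=
    fun t ht v => (measurableSet_le (hp t ht) measurable_const).inter
      (measurableSet_eq_fun hbm measurable_const)
  have hi : ∀ t ∈ S, ∀ v, Integrable (fun ω =>
      ({ω | p ω t ≤ v} ∩ {ω | bh S f α (p ω) = v}).indicator (fun _ => (1:ℝ)) ω / v) P :=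
    fun t ht v => ((integrable_const (1:ℝ)).indicator (hms t ht v)).div_const v
  simp_rw [hQ2]
  rw [integral_finsetSum]
  · rw [Finset.sum_div, Finset.mul_sum]
    refine Finset.sum_le_sum fun t ht => ?_
    have ht := Finset.mem_filter.1 ht
    rw [integral_const_mul, integral_finsetSum _ (fun v _ => hi t ht.1 v)]
    have h1 : ∀ v, ∫ ω, ({ω | p ω t ≤ v} ∩ {ω | bh S f α (p ω) = v}).indicator
        (fun _ => (1:ℝ)) ω / v ∂P = P.real ({ω | p ω t ≤ v} ∩ {ω | bh S f α (p ω) = v}) / v := by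
      intro v
      rw [integral_div, integral_indicator (hms t ht.1 v)]
      simp
    simp_rw [h1]
    refine mul_le_of_le_one_right
      (mul_nonneg hα.1.le (div_nonneg (hf t ht.1).le hm.le)) ?_
    exact key_sum_one P (hp t ht.1) hbm (fun ω => hp01 ω t ht.1) (hsup t ht.1 ht.2)
      (hmono t ht.1 ht.2) R hR01
  · intro t ht
    exact (integrable_finsetSum _ (fun v _ => hi t (Finset.mem_filter.1 ht).1 v)).const_mul _

end

lemma eventually_sSup_le {H : ℝ → ℝ} {Hk : ℕ → ℝ → ℝ}
    (hu : TendstoUniformlyOn Hk H atTop (Set.Icc 0 1)) (hc : ContinuousOn H (Set.Icc 0 1))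
    (h0 : ∀ k, Hk k 0 ≤ 0) {ε : ℝ} (hε : 0 < ε) :
    ∀ᶠ k in atTop, sSup {r ∈ Set.Icc (0:ℝ) 1 | Hk k r ≤ 0} ≤
      sSup {r ∈ Set.Icc (0:ℝ) 1 | H r ≤ 0} + ε := by
  set σ := sSup {r ∈ Set.Icc (0:ℝ) 1 | H r ≤ 0} with hσ
  have hK : IsCompact (Set.Icc (0:ℝ) 1 ∩ Set.Ici (σ + ε)) := isCompact_Icc.inter_right isClosed_Ici
  have hpos : ∀ r ∈ Set.Icc (0:ℝ) 1 ∩ Set.Ici (σ + ε), 0 < H r := by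
    rintro r ⟨h1, h2⟩
    by_contra! h3
    have : r ≤ σ := le_csSup ⟨1, fun _ h => h.1.2⟩ ⟨h1, h3⟩
    have h2' : σ + ε ≤ r := h2
    linarith
  obtain ⟨δ, hδ, hδH⟩ := hK.exists_forall_le' (hc.mono Set.inter_subset_left) hpos
  filter_upwards [Metric.tendstoUniformlyOn_iff.1 hu δ hδ] with k hk
  refine csSup_le ⟨0, ⟨le_rfl, zero_le_one⟩, h0 k⟩ ?_
  intro r hr
  by_contra! h
  have h1 := hk r hr.1
  have h2 := hδH r ⟨hr.1, h.le⟩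
  rw [Real.dist_eq, abs_lt] at h1
  linarith [hr.2]

lemma eventually_lt_sSup {H : ℝ → ℝ} {Hk : ℕ → ℝ → ℝ}
    (hu : TendstoUniformlyOn Hk H atTop (Set.Icc 0 1))
    {s : ℝ} (hs : s ∈ Set.Icc (0:ℝ) 1) (hH : H s < 0) :
    ∀ᶠ k in atTop, s ≤ sSup {r ∈ Set.Icc (0:ℝ) 1 | Hk k r ≤ 0} := by
  filter_upwards [(hu.tendsto_at hs).eventually_lt_const hH] with k hk
  exact le_csSup ⟨1, fun _ h => h.1.2⟩ ⟨hs, hk.le⟩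

lemma tendsto_eval {F : ℝ → ℝ} {Fk : ℕ → ℝ → ℝ}
    (hu : TendstoUniformlyOn Fk F atTop (Set.Icc 0 1)) (hc : ContinuousOn F (Set.Icc 0 1))
    {b : ℕ → ℝ} {β : ℝ} (hb : ∀ k, b k ∈ Set.Icc (0:ℝ) 1) (hβ : β ∈ Set.Icc (0:ℝ) 1)
    (h : Tendsto b atTop (nhds β)) :
    Tendsto (fun k => Fk k (b k)) atTop (nhds (F β)) := by
  have h1 : Tendsto (fun k => F (b k)) atTop (nhds (F β)) :=
    (hc β hβ).tendsto.comp (tendsto_nhdsWithin_iff.2 ⟨h, Eventually.of_forall hb⟩)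
  rw [Metric.tendsto_atTop'] at h1 ⊢
  intro ε hε
  obtain ⟨n1, hn1⟩ := h1 (ε/2) (by positivity)
  obtain ⟨n2, hn2⟩ := eventually_atTop.1 (Metric.tendstoUniformlyOn_iff.1 hu (ε/2) (by positivity))
  refine ⟨max n1 n2, fun k hk => ?_⟩
  have e1 := hn1 k (lt_of_le_of_lt (le_max_left _ _) hk)
  have e2 := hn2 k ((le_max_right _ _).trans hk.le) (b k) (hb k)
  rw [dist_comm] at e2
  exact (dist_triangle _ _ _).trans_lt (by linarith)

lemma cdf_continuousOn {E : Type*} [MeasurableSpace E] (ν : Measure E) [IsFiniteMeasure ν]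
    (T A : Set E) (hA : A ⊆ T) (hT : MeasurableSet T) (hAm : MeasurableSet A)
    (p : E → ℝ) (hp : Measurable p)
    (h : ∀ t ∈ Set.Icc (0:ℝ) 1, ν {s ∈ T | p s = t} = 0) :
    ContinuousOn (fun r => (ν (A ∩ {s | p s ≤ r})).toReal) (Set.Icc 0 1) := by
  intro r₀ hr₀
  have hm : ∀ r, MeasurableSet (A ∩ {s | p s ≤ r}) := fun r =>
    hAm.inter (measurableSet_le hp measurable_const)
  have e : (fun r => (ν (A ∩ {s | p s ≤ r})).toReal) =
      fun r => ∫ s, (A ∩ {s | p s ≤ r}).indicator (fun _ => (1:ℝ)) s ∂ν := by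
    ext r
    rw [integral_indicator (hm r)]
    simp [Measure.real]
  rw [e]
  refine ContinuousAt.continuousWithinAt ?_
  refine continuousAt_of_dominated (bound := fun _ => 1) ?_ ?_ (integrable_const _) ?_
  · exact Eventually.of_forall fun r =>
      (measurable_const.indicator (hm r)).aestronglyMeasurable
  · refine Eventually.of_forall fun r => Eventually.of_forall fun s => ?_
    simp only [Set.indicator]
    split_ifs <;> simp
  · have h1 : ∀ᵐ s ∂ν, ¬ (s ∈ T ∧ p s = r₀) := by
      rw [ae_iff]
      simpa using h r₀ hr₀
    filter_upwards [h1] with s hs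
    by_cases hsA : s ∈ A
    · have hne : p s ≠ r₀ := fun h => hs ⟨hA hsA, h⟩
      rcases lt_or_gt_of_ne hne with h | h
      · refine (continuousAt_const (y := (1:ℝ))).congr ?_
        filter_upwards [lt_mem_nhds h] with r hr
        have : s ∈ A ∩ {s | p s ≤ r} := ⟨hsA, le_of_lt hr⟩
        rw [Set.indicator_of_mem this]
      · refine (continuousAt_const (y := (0:ℝ))).congr ?_
        filter_upwards [gt_mem_nhds h] with r hr
        have : s ∉ A ∩ {s | p s ≤ r} := fun h => absurd h.2 (not_le.2 hr)
        rw [Set.indicator_of_notMem this]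
    · refine (continuousAt_const (y := (0:ℝ))).congr ?_
      filter_upwards with r
      have : s ∉ A ∩ {s | p s ≤ r} := fun h => hsA h.1
      rw [Set.indicator_of_notMem this]

lemma pointwise {E : Type*} [MeasurableSpace E] (ν : Measure E) [IsFiniteMeasure ν]
    (T U : Set E) (hU : U ⊆ T) (hT : MeasurableSet T) (hUm : MeasurableSet U)
    (hνT : 0 < ν T) (f : E → ℝ) (hf : ∀ t ∈ T, 0 < f t)
    (α : ℝ) (hα : α ∈ Set.Ioo (0:ℝ) 1)
    (S : ℕ → Finset E) (hS_ne : ∀ k, (S k).Nonempty) (hS_sub : ∀ k, ↑(S k) ⊆ T)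
    (p : E → ℝ) (hp : Measurable p) (hp01 : ∀ t ∈ T, p t ∈ Set.Icc (0:ℝ) 1)
    (β : ℝ) (hβ : β = sSup {r ∈ Set.Icc (0:ℝ) 1 | r / α ≤ (ν {s ∈ T | p s ≤ r}).toReal / (ν T).toReal})
    (b : ℕ → ℝ) (hb : ∀ k, b k = bh (S k) f α p)
    (h1 : TendstoUniformlyOn
        (fun k r => (∑ s ∈ (S k).filter (fun s => p s ≤ r), f s) / (S k).card)
        (fun r => (ν {s ∈ T | p s ≤ r}).toReal) atTop (Set.Icc 0 1))
    (h2 : TendstoUniformlyOn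
        (fun k r => (∑ s ∈ (S k).filter (fun s => s ∈ U ∧ p s ≤ r), f s) / (S k).card)
        (fun r => (ν (U ∩ {s | p s ≤ r})).toReal) atTop (Set.Icc 0 1))
    (h3 : ∀ t ∈ Set.Icc (0:ℝ) 1, ν {s ∈ T | p s = t} = 0)
    (h4 : β ∈ Set.Ioc 0 α → ∀ O : Set ℝ, IsOpen O → β ∈ O →
        ∃ s₁ ∈ O ∩ Set.Icc (0:ℝ) 1,
          s₁ / α < (ν {s ∈ T | p s ≤ s₁}).toReal / (ν T).toReal)
    (h5 : β = 0 → 0 < sInf (p '' T)) :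
    Tendsto (fun k => if 0 < ∑ t ∈ (S k).filter (fun t => p t ≤ b k), f t
      then (∑ t ∈ (S k).filter (fun t => t ∈ U ∧ p t ≤ b k), f t) /
        ∑ t ∈ (S k).filter (fun t => p t ≤ b k), f t
      else 0) atTop (nhds (if 0 < ν {t ∈ T | p t ≤ β}
      then (ν (U ∩ {t | p t ≤ β})).toReal / (ν {t ∈ T | p t ≤ β}).toReal
      else 0)) := by
  have hN : 0 < (ν T).toReal := ENNReal.toReal_pos hνT.ne' (measure_ne_top _ _)
  have hfS : ∀ k, ∀ s ∈ S k, 0 < f s := fun k s hs => hf s (hS_sub k hs)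
  have hm : ∀ k, 0 < ∑ s ∈ S k, f s := fun k => Finset.sum_pos (hfS k) (hS_ne k)
  have hcard : ∀ k, (0:ℝ) < (S k).card := fun k => by
    exact_mod_cast Finset.card_pos.2 (hS_ne k)
  have hca : ContinuousOn (fun r => (ν {s ∈ T | p s ≤ r}).toReal) (Set.Icc 0 1) :=
    cdf_continuousOn ν T T subset_rfl hT hT p hp h3
  have hcu := cdf_continuousOn ν T U hU hT hUm p hp h3
  have hm_t : Tendsto (fun k => (∑ s ∈ S k, f s) / (S k).card) atTop (nhds (ν T).toReal) := by
    have := h1.tendsto_at (x := 1) ⟨zero_le_one, le_rfl⟩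
    have e1 : {s ∈ T | p s ≤ 1} = T := by
      ext s
      exact ⟨fun h => h.1, fun h => ⟨h, (hp01 s h).2⟩⟩
    simp only [e1] at this
    refine this.congr fun k => ?_
    rw [Finset.filter_true_of_mem fun s hs => (hp01 s (hS_sub k hs)).2]
  set a : ℝ → ℝ := fun r => (ν {s ∈ T | p s ≤ r}).toReal with ha
  set A : ℕ → ℝ → ℝ :=
    fun k r => (∑ s ∈ (S k).filter (fun s => p s ≤ r), f s) / (S k).card with hA
  set m : ℕ → ℝ := fun k => (∑ s ∈ S k, f s) / (S k).card with hmdef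
  have hα0 := hα.1
  have hunif : TendstoUniformlyOn (fun k r => r * m k / α - A k r)
      (fun r => r * (ν T).toReal / α - a r) atTop (Set.Icc 0 1) := by
    rw [Metric.tendstoUniformlyOn_iff]
    intro ε hε
    filter_upwards [Metric.tendstoUniformlyOn_iff.1 h1 (ε/2) (by positivity),
      (Metric.tendsto_nhds.1 hm_t) (α * (ε/2)) (by positivity)] with k e1 e2 r hr
    have e1 := e1 r hr
    rw [Real.dist_eq] at e1 e2 ⊢
    have : r * (ν T).toReal / α - a r - (r * m k / α - A k r) =
        -(r * ((m k - (ν T).toReal) / α)) - (a r - A k r) := by ring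
    rw [this]
    refine (abs_sub _ _).trans_lt ?_
    rw [abs_neg, abs_mul, abs_div, abs_of_pos hα0, abs_of_nonneg hr.1]
    have e3 : |m k - (ν T).toReal| / α < ε / 2 := by
      rw [div_lt_iff₀ hα0, mul_comm]; exact e2
    have e4 : r * (|m k - (ν T).toReal| / α) ≤ |m k - (ν T).toReal| / α :=
      mul_le_of_le_one_left (by positivity) hr.2
    linarith
  have hcH : ContinuousOn (fun r => r * (ν T).toReal / α - a r) (Set.Icc 0 1) :=
    ContinuousOn.sub (by fun_prop) hca
  have hiff : ∀ r, r / α ≤ a r / (ν T).toReal ↔ r * (ν T).toReal / α - a r ≤ 0 := by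
    intro r
    rw [le_div_iff₀ hN, sub_nonpos, div_mul_eq_mul_div]
  have hiff' : ∀ k r, r / α ≤ W (S k) f p r ↔ r * m k / α - A k r ≤ 0 := by
    intro k r
    have := hcard k
    unfold W
    rw [le_div_iff₀ (hm k), sub_nonpos]
    simp only [hA, hmdef]
    rw [le_div_iff₀ this]
    have : r * ((∑ s ∈ S k, f s) / (S k).card) / α * (S k).card = r / α * ∑ s ∈ S k, f s := by
      field_simp
    rw [this]
  have hβ' : β = sSup {r ∈ Set.Icc (0:ℝ) 1 | r * (ν T).toReal / α - a r ≤ 0} := by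
    rw [hβ]
    simp only [← hiff]
    rfl
  have hb' : ∀ k, b k = sSup {r ∈ Set.Icc (0:ℝ) 1 | r * m k / α - A k r ≤ 0} := by
    intro k
    rw [hb]
    unfold bh
    simp only [hiff']
  have hH0 : ∀ k, 0 * m k / α - A k 0 ≤ 0 := by
    intro k
    have : 0 ≤ A k 0 := div_nonneg (Finset.sum_nonneg fun s hs =>
      (hfS k s (Finset.mem_filter.1 hs).1).le) (hcard k).le
    simpa using this
  have hup : ∀ ε > 0, ∀ᶠ k in atTop, b k ≤ β + ε := by
    intro ε hε
    have := eventually_sSup_le hunif hcH hH0 hε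
    simp only [← hβ', ← hb'] at this
    exact this
  have hb01 : ∀ k, b k ∈ Set.Icc (0:ℝ) 1 := fun k => by
    rw [hb]
    exact Vals_mem (S k) f α (hfS k) hα (bh_mem_Vals _ _ _ (hfS k) hα _)
  have h0mem : (0:ℝ) ∈ {r ∈ Set.Icc (0:ℝ) 1 | r * (ν T).toReal / α - a r ≤ 0} := by
    refine ⟨⟨le_rfl, zero_le_one⟩, ?_⟩
    have : 0 ≤ a 0 := ENNReal.toReal_nonneg
    simpa using this
  have hβ0 : 0 ≤ β := by rw [hβ']; exact le_csSup ⟨1, fun _ h => h.1.2⟩ h0mem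
  have hβα : β ≤ α := by
    rw [hβ']
    refine csSup_le ⟨0, h0mem⟩ ?_
    intro r hr
    have h6 := (hiff r).2 hr.2
    have h7 : a r / (ν T).toReal ≤ 1 := by
      refine div_le_one_of_le₀ ?_ hN.le
      exact ENNReal.toReal_mono (measure_ne_top _ _) (measure_mono fun s hs => hs.1)
    have h8 := h6.trans h7
    rwa [div_le_one hα0] at h8
  rcases hβ0.eq_or_lt with hz | hpos
  · have hinf := h5 hz.symm
    have hle : ∀ t ∈ T, sInf (p '' T) ≤ p t := fun t ht =>
      csInf_le ⟨0, by rintro _ ⟨s, hs, rfl⟩; exact (hp01 s hs).1⟩ ⟨t, ht, rfl⟩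
    have e1 : {t ∈ T | p t ≤ β} = ∅ := by
      ext t
      simp only [Set.mem_empty_iff_false, iff_false]
      rintro ⟨ht, h⟩
      have := hle t ht
      linarith
    rw [e1]
    simp only [measure_empty, lt_irrefl, if_false]
    refine tendsto_const_nhds.congr' ?_
    filter_upwards [hup (sInf (p '' T) / 2) (by positivity)] with k hk
    have : (S k).filter (fun t => p t ≤ b k) = ∅ := by
      refine Finset.filter_eq_empty_iff.2 fun t ht h => ?_
      have := hle t (hS_sub k ht)
      linarith
    rw [this]
    simp
  · have hbt : Tendsto b atTop (nhds β) := by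
      rw [tendsto_order]
      constructor
      · intro c hc
        obtain ⟨s₁, ⟨hs1, hs2⟩, hs3⟩ := h4 ⟨hpos, hβα⟩ (Set.Ioi c) isOpen_Ioi hc
        have : s₁ * (ν T).toReal / α - a s₁ < 0 := by
          rw [sub_neg]
          rw [lt_div_iff₀ hN, div_mul_eq_mul_div] at hs3
          exact hs3
        filter_upwards [eventually_lt_sSup hunif hs2 this] with k hk
        rw [← hb'] at hk
        exact lt_of_lt_of_le hs1 hk
      · intro c hc
        filter_upwards [hup ((c - β)/2) (by linarith)] with k hk
        linarith
    have hβ01 : β ∈ Set.Icc (0:ℝ) 1 := ⟨hβ0, hβα.trans hα.2.le⟩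
    have hden := tendsto_eval h1 hca hb01 hβ01 hbt
    have hnum := tendsto_eval h2 hcu hb01 hβ01 hbt
    have hclosed : IsClosed {r ∈ Set.Icc (0:ℝ) 1 | r * (ν T).toReal / α - a r ≤ 0} :=
      hcH.preimage_isClosed_of_isClosed isClosed_Icc isClosed_Iic
    have hβmem := hclosed.csSup_mem ⟨0, h0mem⟩ ⟨1, fun _ h => h.1.2⟩
    rw [← hβ'] at hβmem
    have hapos : 0 < a β := by
      have := hβmem.2
      have h9 : 0 < β * (ν T).toReal / α := by positivity
      linarith
    have hνpos : 0 < ν {t ∈ T | p t ≤ β} := (ENNReal.toReal_pos_iff.1 hapos).1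
    rw [if_pos hνpos]
    refine (hnum.div hden hapos.ne').congr' ?_
    filter_upwards [hden.eventually_const_lt hapos] with k hk
    have hk' : 0 < ∑ t ∈ (S k).filter (fun t => p t ≤ b k), f t := by
      by_contra! h
      exact absurd hk (not_lt.2 (div_nonpos_of_nonpos_of_nonneg h (hcard k).le))
    rw [if_pos hk']
    have := (hcard k).ne'
    simp only [Pi.div_apply]
    rw [div_div_div_cancel_right₀ this]

end FBH


/-- if almost surely the realized p-value function `p_ω` satisfies (G1w), (G2w)
and (a1)–(a3), the process `(p(·,t))_{t∈T}` is PRDS on `U`, and the null p-values are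
superuniform, then the weighted step-`k` false discovery proportions converge almost surely to
the limiting false discovery proportion, `Q_k → Q`, and
`limsup_k E[Q_k] ≤ α·ν(U)/ν(T) ≤ α`. -/
theorem fBH_weighted_fdp_tendsto_ae_and_limsup_control {d : ℕ}
    (T : Set (EuclideanSpace ℝ (Fin d)))
    (hT_open : IsOpen T) (hT_bdd : Bornology.IsBounded T) (hT_ne : T.Nonempty)
    (hT_norm : volume T = 1)
    -- weight function and weighted measure ν = f·μ
    (f : EuclideanSpace ℝ (Fin d) → ℝ) (hf_meas : Measurable f)
    (hf_pos : ∀ t ∈ T, 0 < f t) (hf_bdd : ∃ C : ℝ, ∀ t ∈ T, f t ≤ C)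
    (ν : Measure (EuclideanSpace ℝ (Fin d)))
    (hν : ν = (volume.restrict T).withDensity (fun x => ENNReal.ofReal (f x)))
    (U : Set (EuclideanSpace ℝ (Fin d))) (hU_sub : U ⊆ T) (hU_meas : MeasurableSet U)
    (α : ℝ) (hα : α ∈ Set.Ioo (0:ℝ) 1)
    {Ω : Type*} [MeasurableSpace Ω] (P : Measure Ω) [IsProbabilityMeasure P]
    -- the random p-value function
    (p : Ω → EuclideanSpace ℝ (Fin d) → ℝ)
    (hp_meas : ∀ t, Measurable (fun ω => p ω t))
    (hp_meas' : ∀ ω, Measurable (p ω))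
    (hp_val : ∀ ω, ∀ t ∈ T, p ω t ∈ Set.Icc (0:ℝ) 1)
    -- realized cumulated p-value functions and adjusted thresholds
    (a : Ω → ℝ → ℝ) (ha : ∀ ω r, a ω r = (ν {s ∈ T | p ω s ≤ r}).toReal)
    (αStar : Ω → ℝ)
    (hαStar : ∀ ω, αStar ω = sSup {r ∈ Set.Icc (0:ℝ) 1 | r / α ≤ a ω r / (ν T).toReal})
    -- nested grids and weighted empirical quantities
    (S : ℕ → Finset (EuclideanSpace ℝ (Fin d)))
    (hS_ne : ∀ k, (S k).Nonempty) (hS_sub : ∀ k, ↑(S k) ⊆ T)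
    (hS_mono : ∀ k, S k ⊆ S (k + 1))
    (ak : Ω → ℕ → ℝ → ℝ)
    (hak : ∀ ω k r, ak ω k r =
      (∑ s ∈ (S k).filter (fun s => p ω s ≤ r), f s) / ∑ s ∈ S k, f s)
    (b : Ω → ℕ → ℝ)
    (hb : ∀ ω k, b ω k = sSup {r ∈ Set.Icc (0:ℝ) 1 | r / α ≤ ak ω k r})
    -- weighted step-k false discovery proportions
    (Qk : ℕ → Ω → ℝ)
    (hQk : ∀ k ω, Qk k ω = if 0 < ∑ t ∈ (S k).filter (fun t => p ω t ≤ b ω k), f t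
      then (∑ t ∈ (S k).filter (fun t => t ∈ U ∧ p ω t ≤ b ω k), f t) /
        ∑ t ∈ (S k).filter (fun t => p ω t ≤ b ω k), f t
      else 0)
    -- limiting false discovery proportion
    (Q : Ω → ℝ)
    (hQ : ∀ ω, Q ω = if 0 < ν {t ∈ T | p ω t ≤ αStar ω}
      then (ν (U ∩ {t | p ω t ≤ αStar ω})).toReal / (ν {t ∈ T | p ω t ≤ αStar ω}).toReal
      else 0)
    -- almost surely (G1w), (G2w) and (a1)–(a3) hold for the realized p-value function
    (hae : ∀ᵐ ω ∂P,
      TendstoUniformlyOn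
        (fun k r => (∑ s ∈ (S k).filter (fun s => p ω s ≤ r), f s) / (S k).card)
        (fun r => (ν {s ∈ T | p ω s ≤ r}).toReal) atTop (Set.Icc 0 1) ∧
      TendstoUniformlyOn
        (fun k r => (∑ s ∈ (S k).filter (fun s => s ∈ U ∧ p ω s ≤ r), f s) / (S k).card)
        (fun r => (ν (U ∩ {s | p ω s ≤ r})).toReal) atTop (Set.Icc 0 1) ∧
      (∀ t ∈ Set.Icc (0:ℝ) 1, ν {s ∈ T | p ω s = t} = 0) ∧
      (αStar ω ∈ Set.Ioc 0 α → ∀ O : Set ℝ, IsOpen O → αStar ω ∈ O →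
        ∃ s₁ ∈ O ∩ Set.Icc (0:ℝ) 1, ∃ s₂ ∈ O ∩ Set.Icc (0:ℝ) 1,
          s₁ / α < a ω s₁ / (ν T).toReal ∧ a ω s₂ / (ν T).toReal < s₂ / α) ∧
      (αStar ω = 0 → 0 < sInf (p ω '' T)))
    -- the process is PRDS on U
    (hPRDS : ∀ (l : ℕ) (t : Fin l → EuclideanSpace ℝ (Fin d)), (∀ j, t j ∈ T) →
      ∀ j : Fin l, t j ∈ U →
      ∀ D : Set (Fin l → ℝ), MeasurableSet D →
      (∀ x y : Fin l → ℝ, x ∈ D → x ≤ y → y ∈ D) →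
      ∃ g : ℝ → ℝ, MonotoneOn g (Set.Icc 0 1) ∧
        (fun ω => g (p ω (t j))) =ᵐ[P]
          P[(fun ω => D.indicator (fun _ => (1:ℝ)) (fun i => p ω (t i))) |
            MeasurableSpace.comap (fun ω => p ω (t j)) (inferInstance : MeasurableSpace ℝ)])
    -- superuniformity of the null p-values
    (hsuper : ∀ t ∈ U, ∀ x ∈ Set.Icc (0:ℝ) 1,
      P {ω | p ω t ≤ x} ≤ ENNReal.ofReal x) :
    (∀ᵐ ω ∂P, Tendsto (fun k => Qk k ω) atTop (nhds (Q ω))) ∧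
    limsup (fun k => ∫ ω, Qk k ω ∂P) atTop ≤ α * (ν U).toReal / (ν T).toReal ∧
    α * (ν U).toReal / (ν T).toReal ≤ α := by
  have hTm : MeasurableSet T := hT_open.measurableSet
  have hνfin : IsFiniteMeasure ν := by
    obtain ⟨C, hC⟩ := hf_bdd
    refine ⟨?_⟩
    rw [hν, withDensity_apply _ MeasurableSet.univ, Measure.restrict_univ]
    calc ∫⁻ x in T, ENNReal.ofReal (f x) ≤ ∫⁻ x in T, ENNReal.ofReal C :=
          setLIntegral_mono' hTm fun x hx => ENNReal.ofReal_le_ofReal (hC x hx)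
      _ < ⊤ := by simp [hT_norm]
  have hνT : 0 < ν T := by
    rw [hν, withDensity_apply _ hTm, Measure.restrict_restrict hTm, Set.inter_self,
      setLIntegral_pos_iff (by fun_prop)]
    have : T ⊆ Function.support (fun x => ENNReal.ofReal (f x)) ∩ T := fun x hx =>
      ⟨by simpa using hf_pos x hx, hx⟩
    refine lt_of_lt_of_le ?_ (measure_mono this)
    rw [hT_norm]; exact zero_lt_one
  have hN : 0 < (ν T).toReal := ENNReal.toReal_pos hνT.ne' (measure_ne_top _ _)
  have hfS : ∀ k, ∀ s ∈ S k, 0 < f s := fun k s hs => hf_pos s (hS_sub k hs)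
  have hb' : ∀ ω k, b ω k = FBH.bh (S k) f α (p ω) := by
    intro ω k
    rw [hb]
    unfold FBH.bh FBH.W
    simp only [hak]
  have hlast : α * (ν U).toReal / (ν T).toReal ≤ α := by
    rw [mul_div_assoc]
    refine mul_le_of_le_one_right hα.1.le (div_le_one_of_le₀ ?_ hN.le)
    exact ENNReal.toReal_mono (measure_ne_top _ _) (measure_mono hU_sub)
  refine ⟨?_, ?_, hlast⟩
  · filter_upwards [hae] with ω hω
    obtain ⟨h1, h2, h3, h4, h5⟩ := hω
    rw [hQ]
    simp only [hQk]
    refine FBH.pointwise ν T U hU_sub hTm hU_meas hνT f hf_pos α hα S hS_ne hS_sub (p ω)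
      (hp_meas' ω) (hp_val ω) (αStar ω) ?_ (b ω) (hb' ω) h1 h2 h3 ?_ h5
    · rw [hαStar]
      simp only [ha]
    · intro hm O hO hmem
      obtain ⟨s₁, hs₁, _, _, h, _⟩ := h4 hm O hO hmem
      refine ⟨s₁, hs₁, ?_⟩
      rw [← ha]
      exact h
  · have hbound : ∀ k, ∫ ω, Qk k ω ∂P ≤
        α * ((∑ t ∈ (S k).filter (fun t => t ∈ U), f t) / ∑ t ∈ S k, f t) := by
      intro k
      refine FBH.fdr_le P (S k) (hS_ne k) f α (hfS k) hα U p (fun s _ => hp_meas s)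
        (fun ω s hs => hp_val ω s (hS_sub k hs)) ?_ ?_ (Qk k) ?_
      · intro t _ htU x hx
        exact ENNReal.toReal_le_of_le_ofReal hx.1 (hsuper t htU x hx)
      · intro l t ht
        exact hPRDS l t fun j => hS_sub k (ht j)
      · intro ω
        rw [hQk, hb']
    have hQ0 : ∀ k, 0 ≤ ∫ ω, Qk k ω ∂P := by
      intro k
      refine integral_nonneg fun ω => ?_
      simp only [Pi.zero_apply]
      rw [hQk]
      split_ifs with h
      · exact div_nonneg (Finset.sum_nonneg fun s hs =>
          (hfS k s (Finset.mem_filter.1 hs).1).le) h.le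
      · exact le_rfl
    have hlim : Tendsto (fun k => α * ((∑ t ∈ (S k).filter (fun t => t ∈ U), f t) /
        ∑ t ∈ S k, f t)) atTop (nhds (α * (ν U).toReal / (ν T).toReal)) := by
      obtain ⟨ω, h1, h2, -⟩ := hae.exists
      have hone : (1:ℝ) ∈ Set.Icc (0:ℝ) 1 := ⟨zero_le_one, le_rfl⟩
      have t1 := h1.tendsto_at hone
      have t2 := h2.tendsto_at hone
      have e1 : {s ∈ T | p ω s ≤ 1} = T := by
        ext s
        exact ⟨fun h => h.1, fun h => ⟨h, (hp_val ω s h).2⟩⟩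
      have e2 : U ∩ {s | p ω s ≤ 1} = U := by
        ext s
        exact ⟨fun h => h.1, fun h => ⟨h, (hp_val ω s (hU_sub h)).2⟩⟩
      simp only [e1] at t1
      simp only [e2] at t2
      rw [mul_div_assoc]
      refine ((t2.div t1 hN.ne').const_mul α).congr fun k => ?_
      have hc : ((S k).card : ℝ) ≠ 0 := by
        exact_mod_cast (Finset.card_pos.2 (hS_ne k)).ne'
      simp only [Pi.div_apply]
      rw [div_div_div_cancel_right₀ hc,
        Finset.filter_true_of_mem fun s hs => (hp_val ω s (hS_sub k hs)).2]
      congr 3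
      refine Finset.filter_congr fun s hs => ?_
      exact ⟨fun h => h.1, fun h => ⟨h, (hp_val ω s (hU_sub h)).2⟩⟩
    rw [← hlim.limsup_eq]
    refine limsup_le_limsup (Eventually.of_forall hbound) ?_ hlim.isBoundedUnder_le
    exact (isBoundedUnder_of ⟨0, hQ0⟩ : IsBoundedUnder (· ≥ ·) atTop _).isCoboundedUnder_le
end
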